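/- arXiv:1608.00710 — 3 statements merged into one kernel-verified Lean document; each statement's English description precedes it below -/
import Mathlib

section
/- Let X_1, X_2, … be identically distributed and extended negatively dependent random variables in a sub-linear expectation space with lim_{c→∞} 𝔼[(|X_1| − c)⁺] = 0 and C_𝕍(|X_1|) < ∞, and set S_n = Σ_{k=1}^n X_k. Then 𝕍*( { liminf_{n→∞} S_n/n < ℰ[X_1] } ∪ { limsup_{n→∞} S_n/n > 𝔼[X_1] } ) = 0. -/
open Filter MeasureTheory
open scoped ENNReal NNReal

noncomputable section

/-- A sub-linear expectation on `Ω`: a monotone, constant-preserving, sub-additive,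
positively homogeneous functional on real random variables (with values in the
extended reals, so that random variables without a finite expectation are allowed). -/
structure SublinearExp (Ω : Type) where
  E : (Ω → ℝ) → EReal
  mono : ∀ X Y : Ω → ℝ, (∀ ω, X ω ≤ Y ω) → E X ≤ E Y
  const_eq : ∀ c : ℝ, E (fun _ => c) = (c : EReal)
  subadd : ∀ X Y : Ω → ℝ, E (fun ω => X ω + Y ω) ≤ E X + E Y
  pos_homog : ∀ lam : ℝ, 0 ≤ lam → ∀ X : Ω → ℝ,
    E (fun ω => lam * X ω) = (lam : EReal) * E X

namespace SublinearExp

variable {Ω : Type}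

/-- The conjugate expectation `ℰ[X] := −𝔼[−X]`. -/
def cE (SL : SublinearExp Ω) (X : Ω → ℝ) : EReal := - SL.E fun ω => - X ω

/-- The upper capacity `𝕍(A) := inf{𝔼[ξ] : 1_A ≤ ξ}`. -/
def V (SL : SublinearExp Ω) (A : Set Ω) : ℝ :=
  sInf {x : ℝ | ∃ ξ : Ω → ℝ,
    (∀ ω, A.indicator (fun _ => (1 : ℝ)) ω ≤ ξ ω) ∧ SL.E ξ = (x : EReal)}

/-- The lower capacity `𝓋(A) := 1 − 𝕍(Aᶜ)`. -/
def vLow (SL : SublinearExp Ω) (A : Set Ω) : ℝ := 1 - SL.V Aᶜ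

/-- The Choquet integral `C_𝕍(X) := ∫₀^∞ 𝕍(X ≥ t) dt` (of a non-negative r.v.). -/
def Choquet (SL : SublinearExp Ω) (X : Ω → ℝ) : ℝ≥0∞ :=
  ∫⁻ t in Set.Ioi (0 : ℝ), ENNReal.ofReal (SL.V {ω | t ≤ X ω})

/-- The outer capacity `𝕍*(A) := inf{Σ_n 𝕍(A_n) : A ⊆ ∪_n A_n}`. -/
def Vout (SL : SublinearExp Ω) (A : Set Ω) : ℝ≥0∞ :=
  ⨅ (B : ℕ → Set Ω) (_ : A ⊆ ⋃ n, B n), ∑' n, ENNReal.ofReal (SL.V (B n))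

/-- The upper capacity is continuous: continuous from below and from above. -/
def ContinuousCapacity (SL : SublinearExp Ω) : Prop :=
  (∀ A : ℕ → Set Ω, Monotone A →
    Tendsto (fun n => SL.V (A n)) atTop (nhds (SL.V (⋃ n, A n)))) ∧
  (∀ A : ℕ → Set Ω, Antitone A →
    Tendsto (fun n => SL.V (A n)) atTop (nhds (SL.V (⋂ n, A n))))

/-- Bounded Lipschitz function on ℝ. -/
def IsBLip (g : ℝ → ℝ) : Prop :=
  (∃ L : NNReal, LipschitzWith L g) ∧ ∃ M : ℝ, ∀ x, |g x| ≤ M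

/-- Local Lipschitz function on ℝ: `|φ(x) − φ(y)| ≤ C(1+|x|^m+|y|^m)|x−y|`. -/
def IsLocLip (φ : ℝ → ℝ) : Prop :=
  ∃ (C : ℝ) (m : ℕ), ∀ x y : ℝ, |φ x - φ y| ≤ C * (1 + |x| ^ m + |y| ^ m) * |x - y|

/-- Upper extended negative dependence (finite family) with dominating constant `K`:
`𝔼[∏ g_i(X_i)] ≤ K ∏ 𝔼[g_i(X_i)]` for all non-negative bounded Lipschitz
non-decreasing `g_i`.  (Expectations of bounded functions are finite, whence
the `toReal`.) -/
def UENDFin (SL : SublinearExp Ω) (K : ℝ) {n : ℕ} (X : Fin n → Ω → ℝ) : Prop :=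
  ∀ g : Fin n → ℝ → ℝ, (∀ i, IsBLip (g i)) → (∀ i, Monotone (g i)) →
    (∀ i x, 0 ≤ g i x) →
    SL.E (fun ω => ∏ i, g i (X i ω)) ≤
      ((K * ∏ i, (SL.E fun ω => g i (X i ω)).toReal : ℝ) : EReal)

/-- Upper extended negative dependence for a sequence. -/
def UEND (SL : SublinearExp Ω) (K : ℝ) (X : ℕ → Ω → ℝ) : Prop :=
  ∀ n : ℕ, ∀ g : ℕ → ℝ → ℝ, (∀ i, IsBLip (g i)) → (∀ i, Monotone (g i)) →
    (∀ i x, 0 ≤ g i x) →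
    SL.E (fun ω => ∏ i ∈ Finset.range n, g i (X i ω)) ≤
      ((K * ∏ i ∈ Finset.range n, (SL.E fun ω => g i (X i ω)).toReal : ℝ) : EReal)

/-- Lower extended negative dependence for a sequence. -/
def LEND (SL : SublinearExp Ω) (K : ℝ) (X : ℕ → Ω → ℝ) : Prop :=
  ∀ n : ℕ, ∀ g : ℕ → ℝ → ℝ, (∀ i, IsBLip (g i)) → (∀ i, Antitone (g i)) →
    (∀ i x, 0 ≤ g i x) →
    SL.E (fun ω => ∏ i ∈ Finset.range n, g i (X i ω)) ≤
      ((K * ∏ i ∈ Finset.range n, (SL.E fun ω => g i (X i ω)).toReal : ℝ) : EReal)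

/-- Extended negative dependence = upper and lower END. -/
def END (SL : SublinearExp Ω) (K : ℝ) (X : ℕ → Ω → ℝ) : Prop :=
  UEND SL K X ∧ LEND SL K X

/-- Upper extended negative dependence under the conjugate expectation `ℰ`
(finite family). -/
def UENDFinConj (SL : SublinearExp Ω) (K : ℝ) {n : ℕ} (X : Fin n → Ω → ℝ) : Prop :=
  ∀ g : Fin n → ℝ → ℝ, (∀ i, IsBLip (g i)) → (∀ i, Monotone (g i)) →
    (∀ i x, 0 ≤ g i x) →
    SL.cE (fun ω => ∏ i, g i (X i ω)) ≤
      ((K * ∏ i, (SL.cE fun ω => g i (X i ω)).toReal : ℝ) : EReal)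

/-- Upper extended negative dependence under the conjugate expectation (sequence). -/
def UENDconj (SL : SublinearExp Ω) (K : ℝ) (X : ℕ → Ω → ℝ) : Prop :=
  ∀ n : ℕ, ∀ g : ℕ → ℝ → ℝ, (∀ i, IsBLip (g i)) → (∀ i, Monotone (g i)) →
    (∀ i x, 0 ≤ g i x) →
    SL.cE (fun ω => ∏ i ∈ Finset.range n, g i (X i ω)) ≤
      ((K * ∏ i ∈ Finset.range n, (SL.cE fun ω => g i (X i ω)).toReal : ℝ) : EReal)

/-- Lower extended negative dependence under the conjugate expectation (sequence). -/
def LENDconj (SL : SublinearExp Ω) (K : ℝ) (X : ℕ → Ω → ℝ) : Prop :=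
  ∀ n : ℕ, ∀ g : ℕ → ℝ → ℝ, (∀ i, IsBLip (g i)) → (∀ i, Antitone (g i)) →
    (∀ i x, 0 ≤ g i x) →
    SL.cE (fun ω => ∏ i ∈ Finset.range n, g i (X i ω)) ≤
      ((K * ∏ i ∈ Finset.range n, (SL.cE fun ω => g i (X i ω)).toReal : ℝ) : EReal)

/-- Extended negative dependence under the conjugate expectation. -/
def ENDconj (SL : SublinearExp Ω) (K : ℝ) (X : ℕ → Ω → ℝ) : Prop :=
  UENDconj SL K X ∧ LENDconj SL K X

/-- Extended independence of a sequence: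
`𝔼[∏ ψ_i(X_i)] = ∏ 𝔼[ψ_i(X_i)]` for non-negative local Lipschitz `ψ_i`,
whenever the expectations involved are finite. -/
def ExtIndep (SL : SublinearExp Ω) (X : ℕ → Ω → ℝ) : Prop :=
  ∀ n : ℕ, ∀ ψ : ℕ → ℝ → ℝ, (∀ i, IsLocLip (ψ i)) → (∀ i x, 0 ≤ ψ i x) →
    (∀ i ∈ Finset.range n, SL.E (fun ω => ψ i (X i ω)) ≠ ⊤) →
    SL.E (fun ω => ∏ i ∈ Finset.range n, ψ i (X i ω)) =
      ((∏ i ∈ Finset.range n, (SL.E fun ω => ψ i (X i ω)).toReal : ℝ) : EReal)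

/-- Extended independence of two random variables. -/
def ExtIndepPair (SL : SublinearExp Ω) (Y Z : Ω → ℝ) : Prop :=
  ∀ ψ₁ ψ₂ : ℝ → ℝ, IsLocLip ψ₁ → IsLocLip ψ₂ →
    (∀ x, 0 ≤ ψ₁ x) → (∀ x, 0 ≤ ψ₂ x) →
    SL.E (fun ω => ψ₁ (Y ω)) ≠ ⊤ → SL.E (fun ω => ψ₂ (Z ω)) ≠ ⊤ →
    SL.E (fun ω => ψ₁ (Y ω) * ψ₂ (Z ω)) =
      (((SL.E fun ω => ψ₁ (Y ω)).toReal * (SL.E fun ω => ψ₂ (Z ω)).toReal : ℝ) : EReal)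

/-- Identically distributed: `𝔼[φ(X_i)] = 𝔼[φ(X_1)]` for all local Lipschitz `φ`. -/
def IdentDist (SL : SublinearExp Ω) (X : ℕ → Ω → ℝ) : Prop :=
  ∀ (i : ℕ) (φ : ℝ → ℝ), IsLocLip φ →
    SL.E (fun ω => φ (X i ω)) = SL.E fun ω => φ (X 0 ω)

end SublinearExp

/-- `log x = ln(x ∨ e)`. -/
def paperLog (x : ℝ) : ℝ := Real.log (max x (Real.exp 1))

/-- `a_n = √(2 n log log n)` with the above convention for `log`. -/
def lilA (n : ℕ) : ℝ := Real.sqrt (2 * n * paperLog (paperLog n))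

namespace SublinearExp

variable {Ω : Type}

lemma E_ne_bot (SL : SublinearExp Ω) (X : Ω → ℝ) : SL.E X ≠ ⊥ := by
  intro h
  have h0 := SL.subadd X (fun ω => -X ω)
  have hc := SL.const_eq 0
  simp only [add_neg_cancel, h, EReal.bot_add] at h0
  rw [hc] at h0
  simp at h0

lemma E_nonneg (SL : SublinearExp Ω) {X : Ω → ℝ} (h : ∀ ω, 0 ≤ X ω) : 0 ≤ SL.E X := by
  have := SL.mono (fun _ => 0) X h
  rwa [SL.const_eq 0] at this

lemma E_add_le (SL : SublinearExp Ω) {X Y : Ω → ℝ} {x y : ℝ} (hX : SL.E X ≤ x)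
    (hY : SL.E Y ≤ y) : SL.E (fun ω => X ω + Y ω) ≤ ((x + y : ℝ) : EReal) := by
  rw [EReal.coe_add]
  exact (SL.subadd X Y).trans (add_le_add hX hY)

lemma E_const_mul_le (SL : SublinearExp Ω) {X : Ω → ℝ} {x a : ℝ} (ha : 0 ≤ a)
    (hX : SL.E X ≤ x) : SL.E (fun ω => a * X ω) ≤ ((a * x : ℝ) : EReal) := by
  rw [SL.pos_homog a ha, EReal.coe_mul]
  exact mul_le_mul_of_nonneg_left hX (by exact_mod_cast ha)

lemma E_sum_le (SL : SublinearExp Ω) {ι : Type*} (s : Finset ι) {X : ι → Ω → ℝ} {x : ι → ℝ}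
    (hX : ∀ i, SL.E (X i) ≤ x i) :
    SL.E (fun ω => ∑ i ∈ s, X i ω) ≤ ((∑ i ∈ s, x i : ℝ) : EReal) := by
  classical
  induction s using Finset.induction_on with
  | empty => simpa using (SL.const_eq 0).le
  | insert a s ha ih =>
    simp only [Finset.sum_insert ha]
    exact SL.E_add_le (hX a) ih

lemma V_bddBelow (SL : SublinearExp Ω) (A : Set Ω) :
    BddBelow {x : ℝ | ∃ ξ : Ω → ℝ,
      (∀ ω, A.indicator (fun _ => (1 : ℝ)) ω ≤ ξ ω) ∧ SL.E ξ = (x : EReal)} := by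
  refine ⟨0, ?_⟩
  rintro x ⟨ξ, hξ, hx⟩
  have := SL.E_nonneg fun ω => (Set.indicator_nonneg (fun _ _ => zero_le_one) ω).trans (hξ ω)
  rw [hx] at this
  exact_mod_cast this

lemma V_nonempty (SL : SublinearExp Ω) (A : Set Ω) :
    {x : ℝ | ∃ ξ : Ω → ℝ,
      (∀ ω, A.indicator (fun _ => (1 : ℝ)) ω ≤ ξ ω) ∧ SL.E ξ = (x : EReal)}.Nonempty :=
  ⟨1, fun _ => 1, fun ω => Set.indicator_le_self' (fun _ _ => zero_le_one) ω, SL.const_eq 1⟩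

lemma V_nonneg (SL : SublinearExp Ω) (A : Set Ω) : 0 ≤ SL.V A := by
  refine le_csInf (SL.V_nonempty A) ?_
  rintro x ⟨ξ, hξ, hx⟩
  have := SL.E_nonneg fun ω => (Set.indicator_nonneg (fun _ _ => zero_le_one) ω).trans (hξ ω)
  rw [hx] at this
  exact_mod_cast this

lemma V_le (SL : SublinearExp Ω) {A : Set Ω} {ξ : Ω → ℝ} {x : ℝ} (h0 : ∀ ω, 0 ≤ ξ ω)
    (h1 : ∀ ω ∈ A, 1 ≤ ξ ω) (hx : SL.E ξ ≤ x) : SL.V A ≤ x := by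
  have hnt : SL.E ξ ≠ ⊤ := fun h => by simp [h] at hx
  have hE : SL.E ξ = ((SL.E ξ).toReal : EReal) := (EReal.coe_toReal hnt (SL.E_ne_bot ξ)).symm
  refine (csInf_le (SL.V_bddBelow A) ⟨ξ, fun ω => ?_, hE⟩).trans ?_
  · by_cases hω : ω ∈ A
    · simpa [hω] using h1 ω hω
    · simpa [hω] using h0 ω
  · rw [hE] at hx
    exact_mod_cast hx

lemma V_le_one (SL : SublinearExp Ω) (A : Set Ω) : SL.V A ≤ 1 :=
  SL.V_le (fun _ => zero_le_one) (fun _ _ => le_rfl) (SL.const_eq 1).le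

lemma E_le_V (SL : SublinearExp Ω) {A : Set Ω} {ξ : Ω → ℝ}
    (h : ∀ ω, ξ ω ≤ A.indicator (fun _ => (1 : ℝ)) ω) : SL.E ξ ≤ (SL.V A : EReal) := by
  by_contra! hlt
  obtain ⟨r, hr, hr'⟩ := EReal.lt_iff_exists_real_btwn.1 hlt
  obtain ⟨x, ⟨η, hη, hx⟩, hxr⟩ := exists_lt_of_csInf_lt (SL.V_nonempty A)
    (show SL.V A < r by exact_mod_cast hr)
  have := SL.mono ξ η fun ω => (h ω).trans (hη ω)
  rw [hx] at this
  have := hr'.trans_le this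
  exact absurd hxr (not_lt.2 (by exact_mod_cast this.le))

lemma V_mono (SL : SublinearExp Ω) {A B : Set Ω} (h : A ⊆ B) : SL.V A ≤ SL.V B := by
  refine csInf_le_csInf (SL.V_bddBelow A) (SL.V_nonempty B) ?_
  rintro x ⟨ξ, hξ, hx⟩
  exact ⟨ξ, fun ω => (Set.indicator_le_indicator_of_subset h (fun _ => zero_le_one) ω).trans (hξ ω),
    hx⟩

lemma V_empty (SL : SublinearExp Ω) : SL.V ∅ = 0 :=
  le_antisymm (SL.V_le (fun _ => le_rfl) (by simp) (SL.const_eq 0).le) (SL.V_nonneg ∅)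

/-- The outer capacity as an outer measure. -/
def outerV (SL : SublinearExp Ω) : OuterMeasure Ω :=
  OuterMeasure.ofFunction (fun A => ENNReal.ofReal (SL.V A)) (by simp [SL.V_empty])

lemma Vout_eq_outerV (SL : SublinearExp Ω) (A : Set Ω) : SL.Vout A = SL.outerV A := rfl

lemma outerV_frequently_eq_zero (SL : SublinearExp Ω) {A : ℕ → Set Ω} {a : ℕ → ℝ}
    (ha : Summable a) (h : ∀ n, SL.V (A n) ≤ a n) :
    SL.outerV {ω | ∃ᶠ n in atTop, ω ∈ A n} = 0 := by
  refine measure_setOfPred_frequently_eq_zero (p := fun n ω => ω ∈ A n) ?_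
  refine ne_top_of_le_ne_top ha.tsum_ofReal_ne_top (ENNReal.tsum_le_tsum fun n => ?_)
  exact (OuterMeasure.ofFunction_le _).trans (ENNReal.ofReal_le_ofReal (h n))

lemma isLocLip_of_lipschitz {L : ℝ≥0} {f : ℝ → ℝ} (hf : LipschitzWith L f) : IsLocLip f := by
  refine ⟨L, 0, fun x y => ?_⟩
  have h := hf.dist_le_mul x y
  rw [Real.dist_eq, Real.dist_eq] at h
  refine h.trans (mul_le_mul_of_nonneg_right ?_ (abs_nonneg _))
  have := L.coe_nonneg
  simp only [pow_zero]
  linarith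

lemma exp_le_one_add_add_sq_mul_exp {u l : ℝ} (hu : |u| ≤ l) :
    Real.exp u ≤ 1 + u + u ^ 2 * Real.exp l := by
  have h1 : Real.exp u ≤ 1 + u * Real.exp u := by
    have h := Real.add_one_le_exp (-u)
    have h' := mul_le_mul_of_nonneg_right h (Real.exp_pos u).le
    rw [← Real.exp_add, neg_add_cancel, Real.exp_zero] at h'
    linarith
  have h2 := Real.add_one_le_exp u
  have hl : Real.exp |u| ≤ Real.exp l := Real.exp_le_exp.2 hu
  rcases le_total 0 u with h | h
  · rw [abs_of_nonneg h] at hl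
    have : u * (Real.exp u - 1) ≤ u * (u * Real.exp u) :=
      mul_le_mul_of_nonneg_left (by linarith) h
    have : u ^ 2 * Real.exp u ≤ u ^ 2 * Real.exp l := mul_le_mul_of_nonneg_left hl (sq_nonneg u)
    nlinarith
  · have : u ^ 2 * 1 ≤ u ^ 2 * Real.exp l :=
      mul_le_mul_of_nonneg_left ((Real.one_le_exp (abs_nonneg u)).trans hl) (sq_nonneg u)
    nlinarith

lemma isBLip_exp_mul {L : ℝ≥0} {f : ℝ → ℝ} (hf : LipschitzWith L f) {T t : ℝ}
    (hT : ∀ x, |f x| ≤ T) (ht : 0 ≤ t) : IsBLip fun x => Real.exp (t * f x) := by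
  have hb : ∀ x, Real.exp (t * f x) ≤ Real.exp (t * T) := fun x =>
    Real.exp_le_exp.2 (mul_le_mul_of_nonneg_left ((le_abs_self _).trans (hT x)) ht)
  refine ⟨⟨⟨Real.exp (t * T), (Real.exp_pos _).le⟩ * ⟨t, ht⟩ * L,
    LipschitzWith.of_dist_le_mul fun x y => ?_⟩, Real.exp (t * T), fun x => ?_⟩
  · have key : ∀ x y, Real.exp (t * f x) - Real.exp (t * f y)
        ≤ Real.exp (t * T) * t * L * dist x y := by
      intro x y
      have h1 := Real.add_one_le_exp (t * f y - t * f x)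
      have h2 := mul_le_mul_of_nonneg_right h1 (Real.exp_pos (t * f x)).le
      rw [← Real.exp_add, sub_add_cancel] at h2
      have h3 : t * (f x - f y) ≤ t * (L * dist x y) :=
        mul_le_mul_of_nonneg_left ((le_abs_self _).trans (hf.dist_le_mul x y)) ht
      have h4 : 0 ≤ t * (L * dist x y) := by positivity
      have h5 := mul_le_mul_of_nonneg_right h3 (Real.exp_pos (t * f x)).le
      have h6 := mul_le_mul_of_nonneg_left (hb x) h4
      nlinarith
    rw [Real.dist_eq, abs_sub_le_iff]
    refine ⟨key x y, ?_⟩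
    rw [dist_comm]
    exact key y x
  · rw [abs_of_pos (Real.exp_pos _)]
    exact hb x

/-- An exponential inequality for the partial sums of a bounded non-decreasing function of
upper extended negatively dependent, identically distributed random variables. -/
lemma V_sum_ge_le_exp (SL : SublinearExp Ω) {X : ℕ → Ω → ℝ} {K : ℝ} (hK : 0 ≤ K)
    (hid : IdentDist SL X) (hU : UEND SL K X) {L : ℝ≥0} {f : ℝ → ℝ} (hf : LipschitzWith L f)
    (hmono : Monotone f) {T : ℝ} (hT : ∀ x, |f x| ≤ T) {m B : ℝ}
    (hm : SL.E (fun ω => f (X 0 ω)) ≤ m) (hB : SL.E (fun ω => f (X 0 ω) ^ 2) ≤ B)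
    {t : ℝ} (ht : 0 ≤ t) (n : ℕ) (a : ℝ) :
    SL.V {ω | a ≤ ∑ k ∈ Finset.range n, f (X k ω)} ≤
      K * Real.exp (-(t * a) + n * (t * m + t ^ 2 * B * Real.exp (t * T))) := by
  set g : ℝ → ℝ := fun x => Real.exp (t * f x) with hg
  have hgB : IsBLip g := isBLip_exp_mul hf hT ht
  set r : ℝ := t * m + t ^ 2 * B * Real.exp (t * T) with hr
  have hgr : ∀ k, SL.E (fun ω => g (X k ω)) ≤ ((1 + r : ℝ) : EReal) := by
    intro k
    obtain ⟨Lg, hLg⟩ := hgB.1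
    rw [hid k g (isLocLip_of_lipschitz hLg)]
    have h1 := SL.E_add_le (SL.const_eq 1).le (SL.E_add_le (SL.E_const_mul_le ht hm)
      (SL.E_const_mul_le (a := t ^ 2 * Real.exp (t * T)) (by positivity) hB))
    refine (SL.mono _ _ fun ω => ?_).trans (h1.trans (le_of_eq ?_))
    · have hu : |t * f (X 0 ω)| ≤ t * T := by
        rw [abs_mul, abs_of_nonneg ht]
        exact mul_le_mul_of_nonneg_left (hT _) ht
      refine (exp_le_one_add_add_sq_mul_exp hu).trans (le_of_eq ?_)
      ring
    · congr 1
      rw [hr]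
      ring
  have hprod := hU n (fun _ => g) (fun _ => hgB)
    (fun _ x y hxy => Real.exp_le_exp.2 (mul_le_mul_of_nonneg_left (hmono hxy) ht))
    (fun _ x => (Real.exp_pos _).le)
  have hreal : ∏ i ∈ Finset.range n, (SL.E fun ω => g (X i ω)).toReal ≤ Real.exp (n * r) := by
    have h1 : ∀ i ∈ Finset.range n, (SL.E fun ω => g (X i ω)).toReal ≤ Real.exp r := by
      intro i _
      have h2 := EReal.toReal_le_toReal (hgr i) (SL.E_ne_bot _) (EReal.coe_ne_top _)
      rw [EReal.toReal_coe] at h2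
      linarith [Real.add_one_le_exp r]
    have h0 : ∀ i ∈ Finset.range n, 0 ≤ (SL.E fun ω => g (X i ω)).toReal := fun i _ =>
      EReal.toReal_nonneg (SL.E_nonneg fun ω => (Real.exp_pos _).le)
    refine (Finset.prod_le_prod h0 h1).trans (le_of_eq ?_)
    rw [Finset.prod_const, Finset.card_range, ← Real.exp_nat_mul]
  have hE : SL.E (fun ω => ∏ i ∈ Finset.range n, g (X i ω)) ≤
      ((K * Real.exp (n * r) : ℝ) : EReal) :=
    hprod.trans (by exact_mod_cast mul_le_mul_of_nonneg_left hreal hK)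
  have hfin := SL.E_const_mul_le (Real.exp_pos (-(t * a))).le hE
  refine SL.V_le (fun ω => ?_) (fun ω hω => ?_) (hfin.trans (le_of_eq ?_))
  · exact mul_nonneg (Real.exp_pos _).le (Finset.prod_nonneg fun _ _ => (Real.exp_pos _).le)
  · simp only [hg]
    rw [← Real.exp_sum, ← Real.exp_add, ← Finset.mul_sum]
    refine Real.one_le_exp ?_
    have := mul_le_mul_of_nonneg_left hω ht
    linarith
  · congr 1
    rw [Real.exp_add]
    ring

lemma summable_two_pow_mul_V (SL : SublinearExp Ω) {Y : Ω → ℝ} (hCh : SL.Choquet Y ≠ ⊤) :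
    Summable fun j : ℕ => (2 : ℝ) ^ j * SL.V {ω | (2 : ℝ) ^ j / 2 ≤ Y ω} := by
  set e : ℕ → ℝ := fun j => 2 ^ j / 4 with he
  have hemono : Monotone e := fun i j hij =>
    div_le_div_of_nonneg_right (pow_le_pow_right₀ one_le_two hij) (by norm_num)
  have hle : ∑' j, ENNReal.ofReal (2 ^ j / 4 * SL.V {ω | (2 : ℝ) ^ j / 2 ≤ Y ω}) ≤
      SL.Choquet Y := by
    calc ∑' j, ENNReal.ofReal (2 ^ j / 4 * SL.V {ω | (2 : ℝ) ^ j / 2 ≤ Y ω})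
        ≤ ∑' j, ∫⁻ t in Set.Ioc (e j) (e (Order.succ j)),
            ENNReal.ofReal (SL.V {ω | t ≤ Y ω}) := by
          refine ENNReal.tsum_le_tsum fun j => ?_
          have hsucc : e (Order.succ j) = 2 ^ j / 2 := by
            simp only [he, Nat.succ_eq_succ, Nat.succ_eq_add_one, pow_succ]
            ring
          have hvol : volume (Set.Ioc (e j) (e (Order.succ j))) = ENNReal.ofReal (2 ^ j / 4) := by
            rw [Real.volume_Ioc, hsucc]
            congr 1
            simp only [he]
            ring
          rw [mul_comm, ENNReal.ofReal_mul (SL.V_nonneg _), ← hvol, ← setLIntegral_const]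
          refine setLIntegral_mono' measurableSet_Ioc fun t ht => ?_
          refine ENNReal.ofReal_le_ofReal (SL.V_mono fun ω hω => ?_)
          rw [hsucc] at ht
          exact ht.2.trans hω
      _ = ∫⁻ t in ⋃ j, Set.Ioc (e j) (e (Order.succ j)), ENNReal.ofReal (SL.V {ω | t ≤ Y ω}) :=
          (lintegral_iUnion (fun _ => measurableSet_Ioc) hemono.pairwise_disjoint_on_Ioc_succ _).symm
      _ ≤ SL.Choquet Y := by
          refine lintegral_mono_set (Set.iUnion_subset fun j t ht => ?_)
          exact lt_of_le_of_lt (by positivity) ht.1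
  have hs := ENNReal.summable_toReal (ne_top_of_le_ne_top hCh hle)
  refine (hs.mul_left 4).congr fun j => ?_
  rw [ENNReal.toReal_ofReal (mul_nonneg (by positivity) (SL.V_nonneg _))]
  ring

/-- A dyadic bound for the normalized truncated second moment. -/
def dyadicSq (v : ℕ → ℝ) (j : ℕ) : ℝ := (1 + ∑ i ∈ Finset.range j, 4 ^ (i + 1) * v i) / 2 ^ j

lemma dyadicSq_pos {v : ℕ → ℝ} (hv : ∀ j, 0 ≤ v j) (j : ℕ) : 0 < dyadicSq v j := by
  have : 0 ≤ ∑ i ∈ Finset.range j, 4 ^ (i + 1) * v i :=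
    Finset.sum_nonneg fun i _ => mul_nonneg (by positivity) (hv i)
  unfold dyadicSq
  positivity

lemma summable_dyadicSq {v : ℕ → ℝ} (hv : ∀ j, 0 ≤ v j)
    (hs : Summable fun j => 2 ^ j * v j) : Summable (dyadicSq v) := by
  have hrec : ∀ j, dyadicSq v (j + 1) = dyadicSq v j / 2 + 2 * (2 ^ j * v j) := by
    intro j
    have h4 : (4 : ℝ) ^ j = 2 ^ j * 2 ^ j := by rw [← mul_pow]; norm_num
    simp only [dyadicSq, Finset.sum_range_succ, pow_succ, h4]
    field_simp
    ring_nf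
  have hsum : ∀ N, ∑ j ∈ Finset.range N, dyadicSq v j + 2 * dyadicSq v N =
      2 + 4 * ∑ j ∈ Finset.range N, 2 ^ j * v j := by
    intro N
    induction N with
    | zero => simp [dyadicSq]
    | succ N ih =>
      rw [Finset.sum_range_succ, Finset.sum_range_succ, hrec]
      linarith
  refine summable_of_sum_range_le (c := 2 + 4 * ∑' j, 2 ^ j * v j)
    (fun j => (dyadicSq_pos hv j).le) fun N => ?_
  have h1 := hs.sum_le_tsum (Finset.range N) fun j _ => mul_nonneg (by positivity) (hv j)
  have h2 := dyadicSq_pos hv N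
  linarith [hsum N]

lemma sq_min_two_pow_le {y : ℝ} (hy : 0 ≤ y) (j : ℕ) :
    min y (2 ^ j) ^ 2 ≤
      1 + ∑ i ∈ Finset.range j, 4 ^ (i + 1) * (if (2 : ℝ) ^ i / 2 ≤ y then (1 : ℝ) else 0) := by
  induction j with
  | zero =>
    have h0 : 0 ≤ min y 1 := le_min hy zero_le_one
    have h1 : min y 1 ≤ 1 := min_le_right _ _
    simp only [pow_zero, Finset.range_zero, Finset.sum_empty]
    nlinarith
  | succ j ih =>
    rw [Finset.sum_range_succ]
    have hp : (0 : ℝ) < 2 ^ j := by positivity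
    rcases lt_or_ge y (2 ^ j) with h | h
    · rw [min_eq_left h.le] at ih
      rw [min_eq_left (h.le.trans (pow_le_pow_right₀ one_le_two (Nat.le_succ j)))]
      have : 0 ≤ (4 : ℝ) ^ (j + 1) * (if (2 : ℝ) ^ j / 2 ≤ y then (1 : ℝ) else 0) := by
        split_ifs <;> positivity
      linarith
    · rw [if_pos (by linarith)]
      have h0 : 0 ≤ ∑ i ∈ Finset.range j, 4 ^ (i + 1) *
          (if (2 : ℝ) ^ i / 2 ≤ y then (1 : ℝ) else 0) :=
        Finset.sum_nonneg fun i _ => by split_ifs <;> positivity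
      have h1 : min y (2 ^ (j + 1)) ^ 2 ≤ ((2 : ℝ) ^ (j + 1)) ^ 2 :=
        pow_le_pow_left₀ (le_min hy (by positivity)) (min_le_right _ _) 2
      have h2 : ((2 : ℝ) ^ (j + 1)) ^ 2 = 4 ^ (j + 1) := by
        rw [← pow_mul, mul_comm, pow_mul]
        norm_num
      linarith

lemma E_sq_trunc_le (SL : SublinearExp Ω) (Y : Ω → ℝ) {c : ℝ} (hc : 0 ≤ c) (j : ℕ) :
    SL.E (fun ω => min (max (Y ω - c) 0) (2 ^ j) ^ 2) ≤
      ((2 ^ j * dyadicSq (fun i => SL.V {ω | (2 : ℝ) ^ i / 2 ≤ |Y ω|}) j : ℝ) : EReal) := by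
  have h1 := SL.E_add_le (SL.const_eq 1).le (SL.E_sum_le (Finset.range j)
    (X := fun i ω => 4 ^ (i + 1) * (if (2 : ℝ) ^ i / 2 ≤ |Y ω| then (1 : ℝ) else 0))
    (x := fun i => 4 ^ (i + 1) * SL.V {ω | (2 : ℝ) ^ i / 2 ≤ |Y ω|}) fun i =>
      SL.E_const_mul_le (by positivity) (SL.E_le_V fun ω => le_of_eq (by
        simp [Set.indicator_apply])))
  refine (SL.mono _ _ fun ω => ?_).trans (h1.trans (le_of_eq ?_))
  · refine le_trans ?_ (sq_min_two_pow_le (abs_nonneg (Y ω)) j)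
    refine pow_le_pow_left₀ (le_min (le_max_right _ _) (by positivity)) ?_ 2
    refine min_le_min_right _ (max_le ?_ (abs_nonneg _))
    linarith [le_abs_self (Y ω)]
  · congr 1
    unfold dyadicSq
    field_simp

lemma V_exists_two_pow_lt_le (SL : SublinearExp Ω) {X : ℕ → Ω → ℝ} (hid : IdentDist SL X)
    (n j : ℕ) :
    SL.V {ω | ∃ k ∈ Finset.range n, (2 : ℝ) ^ j < |X k ω|} ≤
      n * SL.V {ω | (2 : ℝ) ^ j / 2 ≤ |X 0 ω|} := by
  set T : ℝ := 2 ^ j with hT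
  have hTpos : 0 < T := by positivity
  set h : ℝ → ℝ := fun x => min (max (|x| - T / 2) 0) (T / 2) with hh
  have hlip : LipschitzWith (1 + 0) h :=
    ((lipschitzWith_one_norm.sub (LipschitzWith.const (T / 2))).max_const 0).min_const (T / 2)
  have h0 : ∀ x, 0 ≤ h x := fun x => le_min (le_max_right _ _) (by positivity)
  have hE : ∀ k, SL.E (fun ω => h (X k ω)) ≤
      ((T / 2 * SL.V {ω | T / 2 ≤ |X 0 ω|} : ℝ) : EReal) := by
    intro k
    rw [hid k h (isLocLip_of_lipschitz hlip)]
    refine (SL.mono _ _ fun ω => ?_).trans (SL.E_const_mul_le (by positivity)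
      (SL.E_le_V (A := {ω | T / 2 ≤ |X 0 ω|}) fun ω => le_rfl))
    by_cases hω : T / 2 ≤ |X 0 ω|
    · rw [Set.indicator_of_mem (show ω ∈ {ω | T / 2 ≤ |X 0 ω|} from hω), mul_one]
      exact min_le_right _ _
    · rw [Set.indicator_of_notMem (show ω ∉ {ω | T / 2 ≤ |X 0 ω|} from hω), mul_zero]
      exact (min_le_left _ _).trans (max_le (by linarith) le_rfl)
  have hsum := SL.E_const_mul_le (a := 2 / T) (by positivity)
    (SL.E_sum_le (Finset.range n) hE)
  refine SL.V_le (fun ω => ?_) ?_ (hsum.trans (le_of_eq ?_))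
  · exact mul_nonneg (by positivity) (Finset.sum_nonneg fun k _ => h0 _)
  · rintro ω ⟨k, hk, hkω⟩
    have h1 : h (X k ω) = T / 2 := by
      refine min_eq_right (le_max_of_le_left ?_)
      linarith
    have h2 := Finset.single_le_sum (f := fun k => h (X k ω)) (fun i _ => h0 _) hk
    have h3 : 2 / T * (T / 2) ≤ 2 / T * ∑ k ∈ Finset.range n, h (X k ω) :=
      mul_le_mul_of_nonneg_left (h1 ▸ h2) (by positivity)
    rwa [show 2 / T * (T / 2) = 1 by field_simp] at h3
  · congr 1
    rw [Finset.sum_const, Finset.card_range, nsmul_eq_mul]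
    field_simp

lemma V_trunc_sum_ge_le (SL : SublinearExp Ω) {X : ℕ → Ω → ℝ} {K : ℝ} (hK : 1 ≤ K)
    (hid : IdentDist SL X) (hU : UEND SL K X) {c δ : ℝ} (hc : 0 ≤ c)
    (hδ : SL.E (fun ω => max (X 0 ω - c) 0) ≤ δ) {M : ℕ} (hM : 2 ≤ δ * M) (j : ℕ) :
    SL.V {ω | 2 * δ * ((M * 2 ^ j : ℕ) : ℝ) ≤
        ∑ k ∈ Finset.range (M * 2 ^ j), min (max (X k ω - c) 0) (2 ^ j)} ≤
      K * Real.exp (2 * M) * dyadicSq (fun i => SL.V {ω | (2 : ℝ) ^ i / 2 ≤ |X 0 ω|}) j := by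
  set q := dyadicSq (fun i => SL.V {ω | (2 : ℝ) ^ i / 2 ≤ |X 0 ω|}) j with hq
  have hqpos : 0 < q := dyadicSq_pos (fun _ => SL.V_nonneg _) j
  have hM0 : (0 : ℝ) ≤ M := Nat.cast_nonneg M
  have hexp : 1 ≤ Real.exp (2 * M) := Real.one_le_exp (by positivity)
  rcases lt_or_ge 1 q with h1 | h1
  · have h2 : 1 ≤ K * Real.exp (2 * M) := one_le_mul_of_one_le_of_one_le hK hexp
    exact (SL.V_le_one _).trans (one_le_mul_of_one_le_of_one_le h2 h1.le)
  set T : ℝ := 2 ^ j with hT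
  have hTpos : 0 < T := by positivity
  set s : ℝ := -Real.log q / 2 with hs
  have hs0 : 0 ≤ s := by
    have := Real.log_nonpos hqpos.le h1
    rw [hs]
    linarith
  have hqs : q = Real.exp (-(2 * s)) := by
    rw [hs, show -(2 * (-Real.log q / 2)) = Real.log q by ring, Real.exp_log hqpos]
  have hlip : LipschitzWith (1 + 0) fun x : ℝ => min (max (x - c) 0) T :=
    ((LipschitzWith.id.sub (LipschitzWith.const c)).max_const 0).min_const T
  have hmono : Monotone fun x : ℝ => min (max (x - c) 0) T := fun x y hxy =>
    min_le_min_right _ (max_le_max_right _ (sub_le_sub_right hxy c))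
  have hbd : ∀ x : ℝ, |min (max (x - c) 0) T| ≤ T := fun x => by
    rw [abs_of_nonneg (le_min (le_max_right _ _) hTpos.le)]
    exact min_le_right _ _
  have hm : SL.E (fun ω => min (max (X 0 ω - c) 0) T) ≤ δ :=
    (SL.mono _ _ fun ω => min_le_left _ _).trans hδ
  have key := SL.V_sum_ge_le_exp (zero_le_one.trans hK) hid hU hlip hmono hbd hm
    (SL.E_sq_trunc_le (X 0) hc j) (div_nonneg hs0 hTpos.le) (M * 2 ^ j)
    (2 * δ * ((M * 2 ^ j : ℕ) : ℝ))
  refine key.trans ?_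
  rw [mul_assoc K]
  refine mul_le_mul_of_nonneg_left ?_ (zero_le_one.trans hK)
  rw [← hq, ← hT, div_mul_cancel₀ s hTpos.ne']
  have hn : ((M * 2 ^ j : ℕ) : ℝ) = M * T := by push_cast; rfl
  rw [hn]
  have hexpo : -(s / T * (2 * δ * (M * T))) +
      M * T * (s / T * δ + (s / T) ^ 2 * (T * q) * Real.exp s) =
      -(s * (δ * M)) + M * (s ^ 2 * q * Real.exp s) := by
    field_simp
    ring
  rw [hexpo]
  have hsq : s ^ 2 * q * Real.exp s ≤ 2 := by
    rw [hqs, mul_assoc, ← Real.exp_add, show -(2 * s) + s = -s by ring, Real.exp_neg,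
      ← div_eq_mul_inv, div_le_iff₀ (Real.exp_pos s)]
    linarith [Real.quadratic_le_exp_of_nonneg hs0]
  have h3 : M * (s ^ 2 * q * Real.exp s) ≤ M * 2 := mul_le_mul_of_nonneg_left hsq hM0
  have h4 : s * 2 ≤ s * (δ * M) := mul_le_mul_of_nonneg_left hM hs0
  rw [hqs, ← Real.exp_add, ← hqs]
  exact Real.exp_le_exp.2 (by linarith)

lemma outerV_frequently_tail_sum (SL : SublinearExp Ω) {X : ℕ → Ω → ℝ} {K : ℝ} (hK : 1 ≤ K)
    (hid : IdentDist SL X) (hU : UEND SL K X) (hCh : SL.Choquet (fun ω => |X 0 ω|) ≠ ⊤)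
    {c δ : ℝ} (hc : 0 ≤ c) (hδ : SL.E (fun ω => max (X 0 ω - c) 0) ≤ δ) {M : ℕ}
    (hM : 2 ≤ δ * M) :
    SL.outerV {ω | ∃ᶠ j : ℕ in atTop, 2 * δ * ((M * 2 ^ j : ℕ) : ℝ) ≤
      ∑ k ∈ Finset.range (M * 2 ^ j), max (X k ω - c) 0} = 0 := by
  set v : ℕ → ℝ := fun i => SL.V {ω | (2 : ℝ) ^ i / 2 ≤ |X 0 ω|} with hv
  have hs : Summable fun j => 2 ^ j * v j := SL.summable_two_pow_mul_V hCh
  have hD := SL.outerV_frequently_eq_zero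
    ((summable_dyadicSq (fun _ => SL.V_nonneg _) hs).mul_left (K * Real.exp (2 * M)))
    (SL.V_trunc_sum_ge_le hK hid hU hc hδ hM)
  have hF := SL.outerV_frequently_eq_zero (hs.mul_left (M : ℝ))
    (A := fun j => {ω | ∃ k ∈ Finset.range (M * 2 ^ j), (2 : ℝ) ^ j < |X k ω|}) fun j => by
      refine (SL.V_exists_two_pow_lt_le hid (M * 2 ^ j) j).trans (le_of_eq ?_)
      push_cast
      ring
  refine measure_mono_null (fun ω hω => ?_) (measure_union_null hD hF)
  by_contra hcon
  simp only [Set.mem_union, Set.mem_ofPred_eq, not_or, not_frequently] at hcon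
  obtain ⟨j, hj, hjD, hjF⟩ := (hω.and_eventually (hcon.1.and hcon.2)).exists
  refine hjD (hj.trans (le_of_eq (Finset.sum_congr rfl fun k hk => ?_)))
  refine (min_eq_left (max_le ?_ (by positivity))).symm
  have : |X k ω| ≤ 2 ^ j := not_lt.1 fun h => hjF ⟨k, hk, h⟩
  linarith [le_abs_self (X k ω)]

lemma outerV_frequently_clamp_sum (SL : SublinearExp Ω) {X : ℕ → Ω → ℝ} {K : ℝ} (hK : 1 ≤ K)
    (hid : IdentDist SL X) (hU : UEND SL K X) {c δ m : ℝ} (hc : 0 ≤ c) (hδ : 0 < δ)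
    (hm : SL.E (fun ω => max (min (X 0 ω) c) (-c)) ≤ m) :
    SL.outerV {ω | ∃ᶠ n : ℕ in atTop, n * (m + δ) ≤
      ∑ k ∈ Finset.range n, max (min (X k ω) c) (-c)} = 0 := by
  have hlip : LipschitzWith 1 fun x : ℝ => max (min x c) (-c) :=
    (LipschitzWith.id.min_const c).max_const (-c)
  have hmono : Monotone fun x : ℝ => max (min x c) (-c) := fun x y hxy =>
    max_le_max_right _ (min_le_min_right _ hxy)
  have hbd : ∀ x : ℝ, |max (min x c) (-c)| ≤ c := fun x =>
    abs_le.2 ⟨le_max_right _ _, max_le (min_le_right _ _) (by linarith)⟩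
  have hB : SL.E (fun ω => max (min (X 0 ω) c) (-c) ^ 2) ≤ ((c ^ 2 : ℝ) : EReal) := by
    rw [← SL.const_eq]
    exact SL.mono _ _ fun ω => sq_le_sq' (abs_le.1 (hbd _)).1 (abs_le.1 (hbd _)).2
  obtain ⟨t, ht0, ht1, htδ⟩ : ∃ t : ℝ, 0 < t ∧ t ≤ 1 ∧ t * (c ^ 2 * Real.exp c) ≤ δ / 2 := by
    have hD : 0 < c ^ 2 * Real.exp c + 1 := by positivity
    refine ⟨min 1 (δ / 2 / (c ^ 2 * Real.exp c + 1)), by positivity, min_le_left _ _, ?_⟩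
    have h1 := mul_le_mul_of_nonneg_right
      (min_le_right 1 (δ / 2 / (c ^ 2 * Real.exp c + 1))) (show 0 ≤ c ^ 2 * Real.exp c by positivity)
    refine h1.trans ?_
    rw [div_mul_eq_mul_div, div_le_iff₀ hD]
    nlinarith
  have hsum : Summable fun n : ℕ => K * Real.exp (n * -(t * δ / 2)) :=
    (Real.summable_exp_nat_mul_iff.2 (by have := mul_pos ht0 hδ; linarith)).mul_left K
  refine SL.outerV_frequently_eq_zero hsum fun n => ?_
  refine (SL.V_sum_ge_le_exp (zero_le_one.trans hK) hid hU hlip hmono hbd hm hB ht0.le n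
    (n * (m + δ))).trans ?_
  refine mul_le_mul_of_nonneg_left (Real.exp_le_exp.2 ?_) (zero_le_one.trans hK)
  have h1 : Real.exp (t * c) ≤ Real.exp c := Real.exp_le_exp.2 (by nlinarith)
  have h2 : t ^ 2 * c ^ 2 * Real.exp (t * c) ≤ t * (δ / 2) := by
    have h3 := mul_le_mul_of_nonneg_left h1 (show 0 ≤ t ^ 2 * c ^ 2 by positivity)
    have h4 := mul_le_mul_of_nonneg_left htδ ht0.le
    linarith
  have h5 := mul_le_mul_of_nonneg_left h2 (Nat.cast_nonneg (α := ℝ) n)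
  linarith

lemma exists_dyadic_between {M n J : ℕ} (hM : 0 < M) (hn : M * 2 ^ J ≤ n) :
    ∃ j, J ≤ j ∧ n ≤ M * 2 ^ j ∧ M * 2 ^ j ≤ 2 * n := by
  have hex : ∃ j, n ≤ M * 2 ^ (J + j) :=
    ⟨n, Nat.lt_two_pow_self.le.trans ((Nat.pow_le_pow_right two_pos (Nat.le_add_left n J)).trans
      (Nat.le_mul_of_pos_left _ hM))⟩
  classical
  refine ⟨J + Nat.find hex, Nat.le_add_right _ _, Nat.find_spec hex, ?_⟩
  rcases h : Nat.find hex with _ | i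
  · rw [add_zero]
    omega
  · have := Nat.find_min hex (m := i) (by omega)
    rw [← add_assoc, pow_succ, ← mul_assoc]
    omega

lemma outerV_limsup_mean_gt (SL : SublinearExp Ω) {X : ℕ → Ω → ℝ} {K : ℝ} (hK : 1 ≤ K)
    (hid : IdentDist SL X) (hU : UEND SL K X)
    (hunif : Tendsto (fun c : ℝ => SL.E fun ω => max (|X 0 ω| - c) 0) atTop (nhds (0 : EReal)))
    (hCh : SL.Choquet (fun ω => |X 0 ω|) ≠ ⊤) :
    SL.outerV {ω | SL.E (X 0) < limsup (fun n : ℕ =>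
      (((∑ k ∈ Finset.range n, X k ω) / n : ℝ) : EReal)) atTop} = 0 := by
  have hex : ∀ δ : ℝ, 0 < δ → ∃ c : ℝ, 0 ≤ c ∧ SL.E (fun ω => max (|X 0 ω| - c) 0) ≤ δ := by
    intro δ hδ
    have h1 := hunif.eventually_le_const (show (0 : EReal) < δ by exact_mod_cast hδ)
    exact ((eventually_ge_atTop 0).and h1).exists
  obtain ⟨μ, hμ⟩ : ∃ μ : ℝ, SL.E (X 0) = μ := by
    obtain ⟨c, -, hc⟩ := hex 1 one_pos
    have h1 : SL.E (X 0) ≤ ((1 + c : ℝ) : EReal) :=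
      (SL.mono _ _ fun ω => by
        linarith [le_abs_self (X 0 ω), le_max_left (|X 0 ω| - c) 0]).trans
        (SL.E_add_le hc (SL.const_eq c).le)
    exact ⟨_, (EReal.coe_toReal (ne_top_of_le_ne_top (EReal.coe_ne_top _) h1)
      (SL.E_ne_bot _)).symm⟩
  have hδnull : ∀ δ : ℝ, 0 < δ → SL.outerV {ω | ∃ᶠ n : ℕ in atTop,
      μ + 6 * δ < (∑ k ∈ Finset.range n, X k ω) / n} = 0 := by
    intro δ hδ
    obtain ⟨c, hc, hcδ⟩ := hex δ hδ
    obtain ⟨M, hM⟩ := exists_nat_gt (2 / δ)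
    have hM2 : 2 ≤ δ * M := by
      rw [div_lt_iff₀ hδ] at hM
      linarith
    have hM0 : 0 < M := by
      have : (0 : ℝ) < M := lt_trans (by positivity) hM
      exact_mod_cast this
    have htail := SL.outerV_frequently_tail_sum hK hid hU hCh hc
      ((SL.mono _ _ fun ω => max_le_max_right _ (sub_le_sub_right (le_abs_self _) c)).trans hcδ) hM2
    have hclamp := SL.outerV_frequently_clamp_sum hK hid hU (m := μ + δ) hc hδ
      ((SL.mono _ _ fun ω => by
        rcases abs_cases (X 0 ω) with h | h <;>
        rcases min_cases (X 0 ω) c with h' | h' <;>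
        rcases max_cases (min (X 0 ω) c) (-c) with h'' | h'' <;>
        linarith [le_max_left (|X 0 ω| - c) 0, le_max_right (|X 0 ω| - c) 0]).trans
          (SL.E_add_le hμ.le hcδ))
    refine measure_mono_null (fun ω hω => ?_) (measure_union_null htail hclamp)
    by_contra hcon
    simp only [Set.mem_union, Set.mem_ofPred_eq, not_or, not_frequently, not_le] at hcon
    obtain ⟨J, hJ⟩ := eventually_atTop.1 hcon.1
    obtain ⟨n, hn, hnc, hnJ⟩ := (hω.and_eventually
      (hcon.2.and (eventually_ge_atTop (M * 2 ^ J)))).exists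
    have hn0 : (0 : ℝ) < n := by
      have : 0 < M * 2 ^ J := by positivity
      exact_mod_cast this.trans_le hnJ
    obtain ⟨j, hjJ, hnj, hjn⟩ := exists_dyadic_between hM0 hnJ
    have h1 : ∑ k ∈ Finset.range n, X k ω ≤ ∑ k ∈ Finset.range n, max (min (X k ω) c) (-c) +
        ∑ k ∈ Finset.range n, max (X k ω - c) 0 := by
      rw [← Finset.sum_add_distrib]
      refine Finset.sum_le_sum fun k _ => ?_
      rcases min_cases (X k ω) c with h' | h' <;>
        linarith [le_max_left (min (X k ω) c) (-c), le_max_left (X k ω - c) 0,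
          le_max_right (X k ω - c) 0]
    have h2 : ∑ k ∈ Finset.range n, max (X k ω - c) 0 ≤
        ∑ k ∈ Finset.range (M * 2 ^ j), max (X k ω - c) 0 :=
      Finset.sum_le_sum_of_subset_of_nonneg (Finset.range_mono hnj)
        fun _ _ _ => le_max_right _ _
    have h3 := hJ j hjJ
    have h4 : 2 * δ * ((M * 2 ^ j : ℕ) : ℝ) ≤ 2 * δ * (2 * n) :=
      mul_le_mul_of_nonneg_left (by exact_mod_cast hjn) (by positivity)
    rw [lt_div_iff₀ hn0] at hn
    linarith
  refine measure_mono_null (fun ω hω => ?_)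
    (measure_iUnion_null fun p : ℕ => hδnull (1 / ((p : ℝ) + 1)) (by positivity))
  rw [Set.mem_ofPred_eq, hμ] at hω
  obtain ⟨r, hr, hr'⟩ := EReal.lt_iff_exists_real_btwn.1 hω
  obtain ⟨p, hp⟩ := exists_nat_one_div_lt (show 0 < (r - μ) / 6 by
    have : μ < r := by exact_mod_cast hr
    linarith)
  refine Set.mem_iUnion.2 ⟨p, (frequently_lt_of_lt_limsup (by isBoundedDefault) hr').mono
    fun n hn => ?_⟩
  have : r < (∑ k ∈ Finset.range n, X k ω) / n := by exact_mod_cast hn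
  linarith

lemma isLocLip_comp_neg {φ : ℝ → ℝ} (h : IsLocLip φ) : IsLocLip fun x => φ (-x) := by
  obtain ⟨C, m, hC⟩ := h
  refine ⟨C, m, fun x y => ?_⟩
  have := hC (-x) (-y)
  rwa [abs_neg, abs_neg, neg_sub_neg, abs_sub_comm y x] at this

lemma isBLip_comp_neg {g : ℝ → ℝ} (h : IsBLip g) : IsBLip fun x => g (-x) := by
  obtain ⟨⟨L, hL⟩, B, hB⟩ := h
  exact ⟨⟨L * 1, hL.comp LipschitzWith.id.neg⟩, B, fun x => hB (-x)⟩

lemma IdentDist.neg {SL : SublinearExp Ω} {X : ℕ → Ω → ℝ} (h : IdentDist SL X) :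
    IdentDist SL fun k ω => -X k ω :=
  fun i _ hφ => h i _ (isLocLip_comp_neg hφ)

lemma LEND.neg {SL : SublinearExp Ω} {K : ℝ} {X : ℕ → Ω → ℝ} (h : LEND SL K X) :
    UEND SL K fun k ω => -X k ω :=
  fun n g hg hmono hpos => h n (fun i x => g i (-x)) (fun i => isBLip_comp_neg (hg i))
    (fun i _ _ hxy => hmono i (neg_le_neg hxy)) (fun i x => hpos i (-x))

end SublinearExp

/-- Theorem 4.3(a), second part: strong law of large numbers for extended
negatively dependent, identically distributed random variables. -/
theorem stmt8 {Ω : Type} (SL : SublinearExp Ω) (X : ℕ → Ω → ℝ)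
    (K : ℝ) (hK : 1 ≤ K)
    (hid : SublinearExp.IdentDist SL X)
    (hEND : SublinearExp.END SL K X)
    (hunif : Tendsto (fun c : ℝ => SL.E fun ω => max (|X 0 ω| - c) 0)
      atTop (nhds (0 : EReal)))
    (hCh : SL.Choquet (fun ω => |X 0 ω|) ≠ ⊤) :
    SL.Vout
      ({ω | liminf (fun n : ℕ =>
          (((∑ k ∈ Finset.range n, X k ω) / n : ℝ) : EReal)) atTop < SL.cE (X 0)} ∪
       {ω | SL.E (X 0) < limsup (fun n : ℕ =>
          (((∑ k ∈ Finset.range n, X k ω) / n : ℝ) : EReal)) atTop}) = 0 := by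
  rw [SublinearExp.Vout_eq_outerV]
  refine measure_union_null (measure_mono_null (fun ω hω => ?_)
    (SL.outerV_limsup_mean_gt hK hid.neg hEND.2.neg (by simpa only [abs_neg] using hunif)
      (by simpa only [abs_neg] using hCh))) (SL.outerV_limsup_mean_gt hK hid hEND.1 hunif hCh)
  rw [Set.mem_ofPred_eq, SublinearExp.cE, EReal.lt_neg_comm, ← EReal.limsup_neg] at hω
  refine hω.trans_le (le_of_eq ?_)
  congr 1
  ext n
  simp [neg_div]
end
end

section
/- Let X_1, X_2, … be identically distributed real random variables on a probability space (Ω, ℱ, P) which are extended negatively dependent with some dominating constant K ≥ 1, and set S_n = Σ_{k=1}^n X_k. If E[|X_1|] < ∞, then P( S_n/n → E[X_1] as n → ∞ ) = 1. -/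
open Filter MeasureTheory
open scoped ENNReal NNReal

noncomputable section

/-- Extended negative dependence (classical, on a probability space) with
dominating constant `K`: the joint lower-left and upper-right tails are
dominated by `K` times the product of the marginal tails. -/
def ENDProb {Ω : Type} [MeasurableSpace Ω] (P : Measure Ω) (K : ℝ)
    (X : ℕ → Ω → ℝ) : Prop :=
  ∀ (n : ℕ) (x : ℕ → ℝ),
    (P (⋂ i ∈ Finset.range n, {ω | X i ω ≤ x i}) ≤
      ENNReal.ofReal K * ∏ i ∈ Finset.range n, P {ω | X i ω ≤ x i}) ∧
    (P (⋂ i ∈ Finset.range n, {ω | x i < X i ω}) ≤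
      ENNReal.ofReal K * ∏ i ∈ Finset.range n, P {ω | x i < X i ω})

/-- Upper-orthant extended negative dependence with a constant `C`. -/
def UpperEND {Ω : Type*} [MeasurableSpace Ω] (P : Measure Ω) (C : ℝ≥0∞)
    (W : ℕ → Ω → ℝ) : Prop :=
  ∀ (n : ℕ) (x : ℕ → ℝ), P (⋂ i ∈ Finset.range n, {ω | x i < W i ω}) ≤
    C * ∏ i ∈ Finset.range n, P {ω | x i < W i ω}

/-- A bound on finite intersections by products of measures passes to increasing unions. -/
lemma measure_biInter_iUnion_le {Ω : Type*} [MeasurableSpace Ω] {P : Measure Ω} {C : ℝ≥0∞}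
    {n : ℕ} {A : ℕ → ℕ → Set Ω} (hA : ∀ i, Monotone (A i))
    (h : ∀ m, P (⋂ i ∈ Finset.range n, A i m) ≤ C * ∏ i ∈ Finset.range n, P (A i m)) :
    P (⋂ i ∈ Finset.range n, ⋃ m, A i m) ≤ C * ∏ i ∈ Finset.range n, P (⋃ m, A i m) := by
  have hmono : Monotone fun m => ⋂ i ∈ Finset.range n, A i m := fun a b hab =>
    Set.iInter₂_mono fun i _ => hA i hab
  have heq : (⋂ i ∈ Finset.range n, ⋃ m, A i m) = ⋃ m, ⋂ i ∈ Finset.range n, A i m := by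
    refine Set.Subset.antisymm (fun ω hω => ?_) (Set.iUnion_subset fun m =>
      Set.iInter₂_mono fun i _ => Set.subset_iUnion _ m)
    simp only [Set.mem_iInter, Set.mem_iUnion] at hω ⊢
    choose! k hk using hω
    exact ⟨(Finset.range n).sup k, fun i hi => hA i (Finset.le_sup hi) (hk i hi)⟩
  rw [heq, hmono.measure_iUnion]
  refine iSup_le fun m => (h m).trans ?_
  gcongr with i
  exact Set.subset_iUnion _ m

/-- A nonempty open upper set of reals is an increasing union of open rays. -/
lemma IsUpperSet.exists_eq_iUnion_Ioi {O : Set ℝ} (hO : IsUpperSet O) (hopen : IsOpen O)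
    (hne : O.Nonempty) : ∃ x : ℕ → ℝ, Antitone x ∧ O = ⋃ m, Set.Ioi (x m) := by
  by_cases hb : BddBelow O
  · refine ⟨fun _ => sInf O, antitone_const, ?_⟩
    rw [Set.iUnion_const]
    ext y
    refine ⟨fun hy => ?_, fun hy => ?_⟩
    · obtain ⟨z, hzO, hzy⟩ : ∃ z ∈ O, z < y := by
        obtain ⟨l, hl, hlO⟩ := exists_Ioc_subset_of_mem_nhds (hopen.mem_nhds hy) ⟨y - 1, by simp⟩
        exact ⟨(l + y) / 2, hlO ⟨by linarith, by linarith⟩, by linarith⟩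
      exact (csInf_le hb hzO).trans_lt hzy
    · obtain ⟨z, hz, hzy⟩ := exists_lt_of_csInf_lt hne hy
      exact hO hzy.le hz
  · refine ⟨fun m => -(m : ℝ), fun a b hab => by simpa using hab, ?_⟩
    ext y
    simp only [Set.mem_iUnion, Set.mem_Ioi]
    refine ⟨fun _ => ?_, fun _ => ?_⟩
    · obtain ⟨m, hm⟩ := exists_nat_gt (-y)
      exact ⟨m, by linarith⟩
    · obtain ⟨z, hz, hzy⟩ := not_bddBelow_iff.1 hb y
      exact hO hzy.le hz

section

variable {Ω : Type*} [MeasurableSpace Ω] {P : Measure Ω} {C : ℝ≥0∞}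

lemma UpperEND.comp_monotone {W : ℕ → Ω → ℝ} (hW : UpperEND P C W) {f : ℝ → ℝ}
    (hf : Monotone f) (hfc : Continuous f) : UpperEND P C fun i ω => f (W i ω) := by
  intro n x
  by_cases hne : ∀ i ∈ Finset.range n, {y | x i < f y}.Nonempty
  · have hx : ∀ i, ∃ z : ℕ → ℝ, Antitone z ∧
        (i ∈ Finset.range n → {y | x i < f y} = ⋃ m, Set.Ioi (z m)) := by
      intro i
      by_cases hi : i ∈ Finset.range n
      · obtain ⟨z, hz, h⟩ := IsUpperSet.exists_eq_iUnion_Ioi (O := {y | x i < f y})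
          (fun a b hab ha => lt_of_lt_of_le ha (hf hab))
          (isOpen_lt continuous_const hfc) (hne i hi)
        exact ⟨z, hz, fun _ => h⟩
      · exact ⟨fun _ => 0, antitone_const, fun h => absurd h hi⟩
    choose z hz hzO using hx
    have key : ∀ i ∈ Finset.range n,
        {ω | x i < f (W i ω)} = ⋃ m, {ω | z i m < W i ω} := by
      intro i hi
      have := congrArg (fun O => W i ⁻¹' O) (hzO i hi)
      simp only [Set.preimage_iUnion] at this
      exact this
    rw [Set.iInter₂_congr key, Finset.prod_congr rfl fun i hi => by rw [key i hi]]
    exact measure_biInter_iUnion_le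
      (fun i a b hab ω hω => lt_of_le_of_lt (hz i hab) hω) fun m => hW n fun i => z i m
  · push Not at hne
    obtain ⟨i, hi, hie⟩ := hne
    have : (⋂ i ∈ Finset.range n, {ω | x i < f (W i ω)}) = ∅ := by
      refine Set.eq_empty_of_forall_notMem fun ω hω => ?_
      have h1 : W i ω ∈ {y | x i < f y} := Set.mem_iInter₂.1 hω i hi
      rw [hie] at h1
      exact h1
    rw [this, measure_empty]
    exact zero_le

lemma UpperEND.congr_ae {W W' : ℕ → Ω → ℝ} (hW : UpperEND P C W)
    (h : ∀ i, W i =ᵐ[P] W' i) : UpperEND P C W' := by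
  intro n x
  have hs : ∀ i, ({ω | x i < W' i ω} : Set Ω) =ᵐ[P] {ω | x i < W i ω} := fun i =>
    eventuallyEq_set.2 <| by filter_upwards [h i] with ω hω using by simp [hω]
  have hI : (⋂ i ∈ Finset.range n, {ω | x i < W' i ω} : Set Ω) =ᵐ[P]
      ⋂ i ∈ Finset.range n, {ω | x i < W i ω} :=
    eventuallyEq_set.2 <| by filter_upwards [ae_all_iff.2 h] with ω hω using by simp [hω]
  rw [measure_congr hI, Finset.prod_congr rfl fun i _ => measure_congr (hs i)]
  exact hW n x

/-- The expectation of a product of nonnegative upper-orthant dependent variables is dominated by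
the product of the expectations. -/
lemma UpperEND.lintegral_prod_le [SFinite P] {Z : ℕ → Ω → ℝ} (hZ : UpperEND P C Z)
    (hm : ∀ i, Measurable (Z i)) (h0 : ∀ i ω, 0 ≤ Z i ω) (n : ℕ) :
    ∫⁻ ω, ∏ i ∈ Finset.range n, ENNReal.ofReal (Z i ω) ∂P ≤
      C * ∏ i ∈ Finset.range n, ∫⁻ ω, ENNReal.ofReal (Z i ω) ∂P := by
  have hset : ∀ i s, MeasurableSet {ω | s < Z i ω} := fun i s =>
    measurableSet_lt measurable_const (hm i)
  let g : ℕ → (ℕ → ℝ) → ℕ → Ω → ℝ≥0∞ := fun m x i ω =>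
    if i < m then ENNReal.ofReal (Z i ω) else {ω | x i < Z i ω}.indicator 1 ω
  have hg : ∀ m x i, Measurable (g m x i) := by
    intro m x i
    by_cases hi : i < m
    · simpa [g, hi] using (hm i).ennreal_ofReal
    · simpa [g, hi] using measurable_one.indicator (hset i (x i))
  have main : ∀ m ≤ n, ∀ x : ℕ → ℝ, ∫⁻ ω, ∏ i ∈ Finset.range n, g m x i ω ∂P ≤
      C * ∏ i ∈ Finset.range n, ∫⁻ ω, g m x i ω ∂P := by
    intro m
    induction m with
    | zero =>
      intro _ x
      have h1 : ∀ ω, ∏ i ∈ Finset.range n, g 0 x i ω =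
          (⋂ i ∈ Finset.range n, {ω | x i < Z i ω}).indicator 1 ω := by
        intro ω
        simp only [g, not_lt_zero, if_false, Set.indicator_apply, Pi.one_apply]
        rw [Finset.prod_ite_zero]
        by_cases h : ∀ i ∈ Finset.range n, x i < Z i ω
        · rw [if_pos (by exact h), Set.indicator_of_mem (Set.mem_iInter₂.2 h)]
          simp
        · rw [if_neg (by exact h), Set.indicator_of_notMem (fun h' => h (Set.mem_iInter₂.1 h'))]
      simp_rw [h1]
      rw [lintegral_indicator_one (Finset.measurableSet_biInter _ fun i _ => hset i _)]
      refine (hZ n x).trans_eq ?_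
      congr 1
      refine Finset.prod_congr rfl fun i _ => ?_
      simp only [g, not_lt_zero, if_false]
      rw [lintegral_indicator_one (hset i _)]
    | succ m ih =>
      intro hmn x
      have hmem : m ∈ Finset.range n := Finset.mem_range.2 hmn
      let G : Ω → ℝ≥0∞ := fun ω => ∏ i ∈ (Finset.range n).erase m, g (m + 1) x i ω
      have hG : Measurable G := Finset.measurable_fun_prod _ fun i _ => hg _ _ _
      have hupd : ∀ s, ∀ i ∈ (Finset.range n).erase m,
          g m (Function.update x m s) i = g (m + 1) x i := by
        intro s i hi
        have hne : i ≠ m := Finset.ne_of_mem_erase hi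
        have hiff : i < m + 1 ↔ i < m := by omega
        ext ω
        simp [g, hiff, Function.update_of_ne hne]
      have hbase : ∀ s, g m (Function.update x m s) m = {ω | s < Z m ω}.indicator 1 := by
        intro s
        ext ω
        simp [g]
      have hcake : ∀ ω, ENNReal.ofReal (Z m ω) =
          ∫⁻ s in Set.Ioi (0 : ℝ), {ω | s < Z m ω}.indicator 1 ω := by
        intro ω
        have : (fun s : ℝ => ({ω | s < Z m ω}.indicator 1 ω : ℝ≥0∞)) =
            (Set.Iio (Z m ω)).indicator 1 := by
          ext s
          simp [Set.indicator_apply]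
        rw [this, lintegral_indicator_one measurableSet_Iio,
          Measure.restrict_apply measurableSet_Iio, Set.inter_comm, Set.Ioi_inter_Iio,
          Real.volume_Ioo, sub_zero]
      have hjoint : Measurable fun p : Ω × ℝ => {ω | p.2 < Z m ω}.indicator (1 : Ω → ℝ≥0∞) p.1 := by
        have hS : MeasurableSet {p : Ω × ℝ | p.2 < Z m p.1} :=
          measurableSet_lt measurable_snd ((hm m).comp measurable_fst)
        convert (measurable_one (α := ℝ≥0∞)).indicator hS using 2
        simp [Set.indicator_apply]
      calc ∫⁻ ω, ∏ i ∈ Finset.range n, g (m + 1) x i ω ∂P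
          = ∫⁻ ω, (∫⁻ s in Set.Ioi (0 : ℝ), {ω | s < Z m ω}.indicator 1 ω * G ω) ∂P := by
            refine lintegral_congr fun ω => ?_
            have hs : Measurable fun s : ℝ => ({ω | s < Z m ω}.indicator 1 ω : ℝ≥0∞) :=
              hjoint.comp measurable_prodMk_left
            rw [← Finset.mul_prod_erase _ _ hmem, lintegral_mul_const _ hs, ← hcake]
            simp [g, G]
        _ = ∫⁻ s in Set.Ioi (0 : ℝ), ∫⁻ ω, {ω | s < Z m ω}.indicator 1 ω * G ω ∂P :=
            lintegral_lintegral_swap (hjoint.mul (hG.comp measurable_fst)).aemeasurable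
        _ ≤ ∫⁻ s in Set.Ioi (0 : ℝ), (P {ω | s < Z m ω}) *
              (C * ∏ i ∈ (Finset.range n).erase m, ∫⁻ ω, g (m + 1) x i ω ∂P) := by
            refine lintegral_mono fun s => ?_
            have := ih (by omega) (Function.update x m s)
            rw [← Finset.mul_prod_erase _ _ hmem] at this
            simp_rw [← Finset.mul_prod_erase _ _ hmem] at this
            rw [hbase, lintegral_indicator_one (hset m s),
              Finset.prod_congr rfl fun i hi => by rw [hupd s i hi]] at this
            refine le_trans (le_of_eq ?_) (this.trans_eq (mul_left_comm _ _ _))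
            refine lintegral_congr fun ω => ?_
            congr 1
            exact Finset.prod_congr rfl fun i hi => by rw [hupd s i hi]
        _ = C * ∏ i ∈ Finset.range n, ∫⁻ ω, g (m + 1) x i ω ∂P := by
            rw [lintegral_mul_const, ← lintegral_eq_lintegral_meas_lt P
              (Eventually.of_forall (h0 m)) (hm m).aemeasurable,
              ← Finset.mul_prod_erase (Finset.range n) _ hmem, mul_left_comm]
            · simp [g]
            · exact Antitone.measurable fun a b hab =>
                measure_mono fun ω hω => lt_of_le_of_lt hab hω
  have := main n le_rfl 0
  have e : ∀ i ∈ Finset.range n, g n 0 i = fun ω => ENNReal.ofReal (Z i ω) := fun i hi => by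
    ext ω
    simp [g, Finset.mem_range.1 hi]
  rw [Finset.prod_congr rfl fun i hi => by rw [e i hi]] at this
  refine le_trans (le_of_eq (lintegral_congr fun ω => ?_)) this
  exact Finset.prod_congr rfl fun i hi => by rw [e i hi]

/-- Chernoff bound for upper-orthant dependent variables. -/
lemma UpperEND.measure_sum_ge_le [SFinite P] {W : ℕ → Ω → ℝ} (hW : UpperEND P C W)
    (hm : ∀ i, Measurable (W i)) {q : ℝ}
    (hq : ∀ i, ∫⁻ ω, ENNReal.ofReal (Real.exp (W i ω)) ∂P ≤ ENNReal.ofReal (Real.exp q))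
    (n : ℕ) (l : ℝ) :
    P {ω | n * q + l ≤ ∑ i ∈ Finset.range n, W i ω} ≤ C * ENNReal.ofReal (Real.exp (-l)) := by
  have hprod := (hW.comp_monotone Real.exp_monotone Real.continuous_exp).lintegral_prod_le
    (fun i => (hm i).exp) (fun _ _ => (Real.exp_pos _).le) n
  have hmark := mul_meas_ge_le_lintegral (μ := P)
    (f := fun ω => ∏ i ∈ Finset.range n, ENNReal.ofReal (Real.exp (W i ω)))
    (Finset.measurable_fun_prod _ fun i _ => (hm i).exp.ennreal_ofReal)
    (ENNReal.ofReal (Real.exp (n * q + l)))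
  have hset : {ω | n * q + l ≤ ∑ i ∈ Finset.range n, W i ω} =
      {ω | ENNReal.ofReal (Real.exp (n * q + l)) ≤
        ∏ i ∈ Finset.range n, ENNReal.ofReal (Real.exp (W i ω))} := by
    ext ω
    simp only [Set.mem_ofPred_eq]
    rw [← ENNReal.ofReal_prod_of_nonneg fun i _ => (Real.exp_pos _).le, ← Real.exp_sum,
      ENNReal.ofReal_le_ofReal_iff (Real.exp_pos _).le, Real.exp_le_exp]
  have hpow : ∏ i ∈ Finset.range n, ∫⁻ ω, ENNReal.ofReal (Real.exp (W i ω)) ∂P ≤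
      ENNReal.ofReal (Real.exp (n * q)) := by
    refine (Finset.prod_le_prod' fun i _ => hq i).trans_eq ?_
    rw [Finset.prod_const, Finset.card_range, ← ENNReal.ofReal_pow (Real.exp_pos _).le,
      ← Real.exp_nat_mul]
  have hinv : ENNReal.ofReal (Real.exp (-(n * q + l))) * ENNReal.ofReal (Real.exp (n * q + l))
      = 1 := by
    rw [← ENNReal.ofReal_mul (Real.exp_pos _).le, ← Real.exp_add]
    simp
  rw [hset]
  calc P _ = ENNReal.ofReal (Real.exp (-(n * q + l))) *
        (ENNReal.ofReal (Real.exp (n * q + l)) * P _) := by rw [← mul_assoc, hinv, one_mul]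
    _ ≤ ENNReal.ofReal (Real.exp (-(n * q + l))) * (C * ENNReal.ofReal (Real.exp (n * q))) := by
      exact mul_le_mul' le_rfl (hmark.trans (hprod.trans (mul_le_mul' le_rfl hpow)))
    _ = C * ENNReal.ofReal (Real.exp (-l)) := by
      rw [mul_left_comm, ← ENNReal.ofReal_mul (Real.exp_pos _).le, ← Real.exp_add]
      congr 3
      ring

/-- For small `t > 0`, the Laplace transform of a nonnegative integrable variable is at most
`exp (-t m)` when `m` is below the mean. -/
lemma exists_integral_exp_neg_le [IsProbabilityMeasure P] {Z : Ω → ℝ} (hint : Integrable Z P)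
    (h0 : ∀ ω, 0 ≤ Z ω) {m : ℝ} (hm : m < ∫ ω, Z ω ∂P) :
    ∃ t : ℝ, 0 < t ∧ ∫ ω, Real.exp (-t * Z ω) ∂P ≤ Real.exp (-t * m) := by
  have hlim : Tendsto (fun t : ℝ => ∫ ω, t⁻¹ * (1 - Real.exp (-t * Z ω)) ∂P)
      (nhdsWithin 0 (Set.Ioi 0)) (nhds (∫ ω, Z ω ∂P)) := by
    refine tendsto_integral_filter_of_dominated_convergence Z ?_ ?_ hint ?_
    · refine Eventually.of_forall fun t => ?_
      have := hint.aemeasurable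
      exact AEMeasurable.aestronglyMeasurable (by fun_prop)
    · filter_upwards [self_mem_nhdsWithin] with t (ht : 0 < t)
      refine Eventually.of_forall fun ω => ?_
      have h1 := Real.add_one_le_exp (-t * Z ω)
      have h2 : Real.exp (-t * Z ω) ≤ 1 :=
        Real.exp_le_one_iff.2 (by nlinarith [h0 ω])
      rw [Real.norm_of_nonneg (mul_nonneg (inv_nonneg.2 ht.le) (by linarith)),
        inv_mul_le_iff₀ ht]
      linarith
    · refine Eventually.of_forall fun ω => ?_
      have hd : HasDerivAt (fun t : ℝ => 1 - Real.exp (-t * Z ω)) (Z ω) 0 := by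
        have h1 : HasDerivAt (fun t : ℝ => -t * Z ω) (-1 * Z ω) 0 :=
          (hasDerivAt_neg 0).mul_const _
        simpa using h1.exp.const_sub 1
      have := hd.tendsto_slope_zero_right
      simpa using this
  obtain ⟨t, ht, htpos⟩ := ((hlim.eventually (lt_mem_nhds hm)).and self_mem_nhdsWithin).exists
  have htpos : 0 < t := htpos
  refine ⟨t, htpos, ?_⟩
  have hexp : Integrable (fun ω => Real.exp (-t * Z ω)) P := by
    have := hint.aemeasurable
    refine Integrable.of_bound (AEMeasurable.aestronglyMeasurable (by fun_prop)) 1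
      (Eventually.of_forall fun ω => ?_)
    rw [Real.norm_of_nonneg (Real.exp_pos _).le]
    exact Real.exp_le_one_iff.2 (by nlinarith [h0 ω])
  rw [integral_const_mul, integral_sub (integrable_const _) hexp] at ht
  simp only [integral_const, probReal_univ, smul_eq_mul, mul_one] at ht
  rw [lt_inv_mul_iff₀ htpos] at ht
  linarith [Real.add_one_le_exp (-t * m)]

/-- Almost sure lower bound for the partial sums of nonnegative variables. -/
lemma UpperEND.ae_eventually_lt_sum [IsProbabilityMeasure P] {Z : ℕ → Ω → ℝ}
    (hZ : UpperEND P C fun i ω => -Z i ω) (hC : C ≠ ∞) (hm : ∀ i, Measurable (Z i))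
    (h0 : ∀ i ω, 0 ≤ Z i ω) (hid : ∀ i, ProbabilityTheory.IdentDistrib (Z i) (Z 0) P P)
    (hint : Integrable (Z 0) P) {ε : ℝ} (hε : 0 < ε) :
    ∀ᵐ ω ∂P, ∀ᶠ n : ℕ in atTop,
      n * (∫ ω, Z 0 ω ∂P - ε) < ∑ i ∈ Finset.range n, Z i ω := by
  set μ := ∫ ω, Z 0 ω ∂P
  obtain ⟨t, ht, hlap⟩ := exists_integral_exp_neg_le hint (h0 0)
    (show μ - ε / 2 < ∫ ω, Z 0 ω ∂P by linarith)
  have hW : UpperEND P C fun i ω => -t * Z i ω := by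
    have := hZ.comp_monotone (f := fun y => t * y) (fun a b hab => by dsimp only; gcongr)
      (by fun_prop)
    simpa using this
  have hbound : ∀ n : ℕ, P {ω | ∑ i ∈ Finset.range n, Z i ω ≤ n * (μ - ε)} ≤
      C * ENNReal.ofReal (Real.exp (-(t * ε / 2)) ^ n) := by
    intro n
    have hq : ∀ i, ∫⁻ ω, ENNReal.ofReal (Real.exp (-t * Z i ω)) ∂P ≤
        ENNReal.ofReal (Real.exp (-t * (μ - ε / 2))) := by
      intro i
      have hexp : Integrable (fun ω => Real.exp (-t * Z 0 ω)) P := by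
        have := hm 0
        refine Integrable.of_bound (Measurable.aestronglyMeasurable (by fun_prop)) 1
          (Eventually.of_forall fun ω => ?_)
        rw [Real.norm_of_nonneg (Real.exp_pos _).le]
        exact Real.exp_le_one_iff.2 (by nlinarith [h0 0 ω])
      have hu : Measurable fun y : ℝ => ENNReal.ofReal (Real.exp (-t * y)) := by fun_prop
      have := ((hid i).comp hu).lintegral_eq
      simp only [Function.comp_def] at this
      rw [this, ← ofReal_integral_eq_lintegral_ofReal hexp
        (Eventually.of_forall fun _ => (Real.exp_pos _).le)]
      exact ENNReal.ofReal_le_ofReal hlap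
    have := hW.measure_sum_ge_le (fun i => (hm i).const_mul _) hq n (n * (t * ε / 2))
    rw [← Real.exp_nat_mul, mul_neg]
    refine le_trans (measure_mono fun ω hω => ?_) this
    simp only [Set.mem_ofPred_eq, ← Finset.mul_sum] at hω ⊢
    nlinarith
  have hsum : ∑' n : ℕ, P {ω | ∑ i ∈ Finset.range n, Z i ω ≤ n * (μ - ε)} ≠ ∞ := by
    refine ne_top_of_le_ne_top ?_ (ENNReal.tsum_le_tsum hbound)
    rw [ENNReal.tsum_mul_left]
    refine ENNReal.mul_ne_top hC (Summable.tsum_ofReal_ne_top ?_)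
    exact summable_geometric_of_lt_one (Real.exp_pos _).le
      (Real.exp_lt_one_iff.2 (by simp only [Left.neg_neg_iff]; positivity))
  filter_upwards [ae_eventually_notMem hsum] with ω hω
  filter_upwards [hω] with n hn
  simpa using hn

/-- Upper tail bound for partial sums of nonnegative variables, in terms of the truncated second
moment. -/
lemma UpperEND.measure_sum_ge_le_truncated [IsProbabilityMeasure P] {Z : ℕ → Ω → ℝ}
    (hZ : UpperEND P C Z) (hC1 : 1 ≤ C) (hm : ∀ i, Measurable (Z i))
    (h0 : ∀ i ω, 0 ≤ Z i ω) (hid : ∀ i, ProbabilityTheory.IdentDistrib (Z i) (Z 0) P P)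
    (hint : Integrable (Z 0) P) {b r v : ℝ} (hb : 0 < b) (hv : 0 < v) {n : ℕ}
    (hn : n ≤ r * b) (hvb : ∫ ω, min (Z 0 ω) b ^ 2 ∂P ≤ v * b) :
    P {ω | n * ∫ ω, Z 0 ω ∂P + 3 * b ≤ ∑ i ∈ Finset.range n, Z i ω} ≤
      (ENNReal.ofReal r + C * ENNReal.ofReal (Real.exp r)) * ENNReal.ofReal v := by
  have hr : 0 ≤ r := by
    by_contra! h
    have : (0 : ℝ) ≤ n := n.cast_nonneg
    nlinarith
  rcases lt_or_ge 1 v with hv1 | hv1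
  · calc P _ ≤ 1 := prob_le_one
      _ ≤ (0 + 1 * 1) * 1 := by simp
      _ ≤ _ := by
        gcongr
        · exact zero_le
        · simpa using hr
        · simpa using hv1.le
  set μ := ∫ ω, Z 0 ω ∂P
  have hmin0 : ∀ i ω, 0 ≤ min (Z i ω) b := fun i ω => le_min (h0 i ω) hb.le
  have hmZ := hm 0
  have hY1 : Integrable (fun ω => min (Z 0 ω) b) P := by
    refine Integrable.of_bound (Measurable.aestronglyMeasurable (by fun_prop)) b
      (Eventually.of_forall fun ω => ?_)
    rw [Real.norm_of_nonneg (hmin0 0 ω)]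
    exact min_le_right _ _
  have hY2 : Integrable (fun ω => min (Z 0 ω) b ^ 2) P := by
    refine Integrable.of_bound (Measurable.aestronglyMeasurable (by fun_prop)) (b ^ 2)
      (Eventually.of_forall fun ω => ?_)
    rw [Real.norm_of_nonneg (sq_nonneg _)]
    exact pow_le_pow_left₀ (hmin0 0 ω) (min_le_right _ _) 2
  have htail : ∀ i, P {ω | b < Z i ω} ≤ ENNReal.ofReal (v / b) := by
    intro i
    have h1 : P {ω | b < Z i ω} = P {ω | b < Z 0 ω} :=
      (hid i).measure_mem_eq (measurableSet_Ioi (a := b))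
    have h2 := mul_meas_ge_le_integral_of_nonneg
      (Eventually.of_forall fun ω => sq_nonneg (min (Z 0 ω) b)) hY2 (b ^ 2)
    rw [h1]
    refine (measure_mono (t := {ω | b ^ 2 ≤ min (Z 0 ω) b ^ 2}) fun ω hω => ?_).trans ?_
    · simp only [Set.mem_ofPred_eq] at hω ⊢
      rw [min_eq_right hω.le]
    · rw [← ofReal_measureReal]
      refine ENNReal.ofReal_le_ofReal ?_
      rw [le_div_iff₀ hb]
      have := h2.trans hvb
      nlinarith
  set a := -Real.log v / 3 with ha
  have ha0 : 0 ≤ a := by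
    have := Real.log_nonpos hv.le hv1
    rw [ha]
    linarith
  have hexp3 : Real.exp (3 * a) = v⁻¹ := by
    rw [ha, show 3 * (-Real.log v / 3) = -Real.log v by ring, Real.exp_neg, Real.exp_log hv]
  set t := a / b with ht
  have ht0 : 0 ≤ t := div_nonneg ha0 hb.le
  have htb : t * b = a := div_mul_cancel₀ _ hb.ne'
  have hpt : ∀ ω, Real.exp (t * min (Z 0 ω) b) ≤
      1 + t * min (Z 0 ω) b + (b ^ 2 * v)⁻¹ * min (Z 0 ω) b ^ 2 := by
    intro ω
    set y := min (Z 0 ω) b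
    have hy0 : 0 ≤ y := hmin0 0 ω
    have hyb : y ≤ b := min_le_right _ _
    set x := t * y with hx
    have hx0 : 0 ≤ x := mul_nonneg ht0 hy0
    have hxa : x ≤ a := htb ▸ mul_le_mul_of_nonneg_left hyb ht0
    have h1 : Real.exp x ≤ 1 + x + x ^ 2 * Real.exp x := by
      have h2 : (1 - x) * Real.exp x ≤ 1 := by
        have := Real.add_one_le_exp (-x)
        rw [Real.exp_neg] at this
        have hp := Real.exp_pos x
        calc (1 - x) * Real.exp x ≤ (Real.exp x)⁻¹ * Real.exp x := by gcongr; linarith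
          _ = 1 := inv_mul_cancel₀ hp.ne'
      nlinarith
    have h3 : x ^ 2 * Real.exp x ≤ (b ^ 2 * v)⁻¹ * y ^ 2 := by
      have hxy : x = a * (y / b) := by rw [hx, ht]; ring
      have haexp : a ≤ Real.exp a := by linarith [Real.add_one_le_exp a]
      calc x ^ 2 * Real.exp x ≤ x ^ 2 * Real.exp a := by gcongr
        _ = (a ^ 2 * Real.exp a) * (y / b) ^ 2 := by rw [hxy]; ring
        _ ≤ (Real.exp a ^ 2 * Real.exp a) * (y / b) ^ 2 := by gcongr
        _ = Real.exp (3 * a) * (y / b) ^ 2 := by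
          rw [show Real.exp (3 * a) = Real.exp a ^ 3 by rw [← Real.exp_nat_mul]; norm_num]
          ring
        _ = (b ^ 2 * v)⁻¹ * y ^ 2 := by rw [hexp3]; field_simp
    linarith
  have hmeanY : ∫ ω, min (Z 0 ω) b ∂P ≤ μ :=
    integral_mono hY1 hint fun ω => min_le_left _ _
  have hq : ∀ i, ∫⁻ ω, ENNReal.ofReal (Real.exp (t * min (Z i ω) b)) ∂P ≤
      ENNReal.ofReal (Real.exp (t * μ + b⁻¹)) := by
    intro i
    have hu : Measurable fun y : ℝ => ENNReal.ofReal (Real.exp (t * min y b)) := by fun_prop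
    have := ((hid i).comp hu).lintegral_eq
    simp only [Function.comp_def] at this
    have hL : Integrable (fun ω => 1 + t * min (Z 0 ω) b) P :=
      (integrable_const _).add (hY1.const_mul _)
    have hR : Integrable (fun ω => 1 + t * min (Z 0 ω) b + (b ^ 2 * v)⁻¹ * min (Z 0 ω) b ^ 2) P :=
      hL.add (hY2.const_mul _)
    rw [this]
    refine (lintegral_mono fun ω => ENNReal.ofReal_le_ofReal (hpt ω)).trans ?_
    rw [← ofReal_integral_eq_lintegral_ofReal hR (Eventually.of_forall fun ω =>
      (Real.exp_pos _).le.trans (hpt ω))]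
    refine ENNReal.ofReal_le_ofReal ?_
    rw [integral_add hL (hY2.const_mul _),
      integral_add (integrable_const _) (hY1.const_mul _), integral_const_mul, integral_const_mul]
    simp only [integral_const, probReal_univ, smul_eq_mul, mul_one]
    have h1 : (b ^ 2 * v)⁻¹ * ∫ ω, min (Z 0 ω) b ^ 2 ∂P ≤ b⁻¹ := by
      calc _ ≤ (b ^ 2 * v)⁻¹ * (v * b) := by gcongr
        _ = b⁻¹ := by field_simp
    have h2 : t * ∫ ω, min (Z 0 ω) b ∂P ≤ t * μ := by gcongr
    linarith [Real.add_one_le_exp (t * μ + b⁻¹)]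
  have hW : UpperEND P C fun i ω => t * min (Z i ω) b :=
    hZ.comp_monotone (f := fun y => t * min y b) (fun x y hxy => by dsimp only; gcongr)
      (by fun_prop)
  have hcher := hW.measure_sum_ge_le (fun i => ((hm i).min measurable_const).const_mul _) hq n
    (3 * a - r)
  have hexpl : ENNReal.ofReal (Real.exp (-(3 * a - r))) =
      ENNReal.ofReal (Real.exp r) * ENNReal.ofReal v := by
    rw [← ENNReal.ofReal_mul (Real.exp_pos _).le, neg_sub, Real.exp_sub, hexp3, div_inv_eq_mul]
  have hsub : {ω | n * μ + 3 * b ≤ ∑ i ∈ Finset.range n, Z i ω} ⊆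
      (⋃ i ∈ Finset.range n, {ω | b < Z i ω}) ∪
      {ω | n * (t * μ + b⁻¹) + (3 * a - r) ≤ ∑ i ∈ Finset.range n, t * min (Z i ω) b} := by
    intro ω hω
    by_cases h : ∃ i ∈ Finset.range n, b < Z i ω
    · left
      simpa using h
    · right
      push Not at h
      simp only [Set.mem_ofPred_eq] at hω ⊢
      rw [← Finset.mul_sum, Finset.sum_congr rfl fun i hi => min_eq_left (h i hi)]
      have h1 : (n : ℝ) * b⁻¹ ≤ r := by
        rw [← div_eq_mul_inv, div_le_iff₀ hb]
        exact hn
      have h2 := mul_le_mul_of_nonneg_left hω ht0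
      have h3 : t * (n * μ + 3 * b) = n * (t * μ) + 3 * a := by rw [← htb]; ring
      linarith
  calc P _ ≤ P (⋃ i ∈ Finset.range n, {ω | b < Z i ω}) + P _ :=
        (measure_mono hsub).trans (measure_union_le _ _)
    _ ≤ ENNReal.ofReal r * ENNReal.ofReal v +
        C * (ENNReal.ofReal (Real.exp r) * ENNReal.ofReal v) := by
      refine add_le_add ?_ (hcher.trans_eq (by rw [hexpl]))
      refine (measure_biUnion_finset_le _ _).trans ((Finset.sum_le_sum fun i _ => htail i).trans ?_)
      rw [Finset.sum_const, Finset.card_range, ← ENNReal.ofReal_nsmul, ← ENNReal.ofReal_mul hr]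
      refine ENNReal.ofReal_le_ofReal ?_
      rw [nsmul_eq_mul]
      calc (n : ℝ) * (v / b) ≤ (r * b) * (v / b) := by gcongr
        _ = r * v := by field_simp
    _ = _ := by ring

/-- Sums of truncated squares along a geometric sequence of truncation levels. -/
lemma sum_min_geometric_sq_div_le {x ε c : ℝ} (hx : 0 ≤ x) (hε : 0 < ε) (hc : 1 < c) (N : ℕ) :
    ∑ k ∈ Finset.range N, min x (ε * c ^ k) ^ 2 / (ε * c ^ k) ≤ 4 * c / (c - 1) * x := by
  have hc0 : 0 < c := by linarith
  have hc1 : 0 < c - 1 := by linarith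
  let Φ : ℝ → ℝ := fun u => x * u / (x + u)
  have hstep : ∀ u, 0 < u → min x u ^ 2 / u ≤ 4 * c / (c - 1) * (Φ (c * u) - Φ u) := by
    intro u hu
    have h1 : 4 * c / (c - 1) * (Φ (c * u) - Φ u) =
        4 * c * x ^ 2 * u / ((x + c * u) * (x + u)) := by
      have : 0 < x + c * u := by positivity
      have : 0 < x + u := by positivity
      simp only [Φ]
      field_simp
      ring
    rw [h1, div_le_div_iff₀ hu (by positivity)]
    rcases le_total x u with h | h
    · rw [min_eq_left h]
      have : (x + c * u) * (x + u) ≤ 4 * c * u * u := by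
        calc (x + c * u) * (x + u) ≤ (2 * c * u) * (2 * u) := by
              gcongr <;> nlinarith
          _ = 4 * c * u * u := by ring
      nlinarith [sq_nonneg x]
    · rw [min_eq_right h]
      have : (x + c * u) * (x + u) ≤ 4 * c * x ^ 2 := by
        calc (x + c * u) * (x + u) ≤ (2 * c * x) * (2 * x) := by
              gcongr <;> nlinarith
          _ = 4 * c * x ^ 2 := by ring
      nlinarith [sq_nonneg u]
  calc ∑ k ∈ Finset.range N, min x (ε * c ^ k) ^ 2 / (ε * c ^ k)
      ≤ ∑ k ∈ Finset.range N, 4 * c / (c - 1) * (Φ (ε * c ^ (k + 1)) - Φ (ε * c ^ k)) := by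
        refine Finset.sum_le_sum fun k _ => (hstep _ (by positivity)).trans_eq ?_
        rw [pow_succ]
        ring_nf
    _ = 4 * c / (c - 1) * (Φ (ε * c ^ N) - Φ (ε * c ^ 0)) := by
        rw [← Finset.mul_sum, Finset.sum_range_sub fun k => Φ (ε * c ^ k)]
    _ ≤ 4 * c / (c - 1) * x := by
        have h1 : Φ (ε * c ^ N) ≤ x := by
          simp only [Φ]
          have : 0 < ε * c ^ N := by positivity
          rw [div_le_iff₀ (by positivity)]
          nlinarith [sq_nonneg x]
        have h2 : 0 ≤ Φ (ε * c ^ 0) := by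
          simp only [Φ]
          positivity
        gcongr
        linarith

/-- Almost sure upper bound for the partial sums of nonnegative variables along geometric times. -/
lemma UpperEND.ae_eventually_sum_lt [IsProbabilityMeasure P] {Z : ℕ → Ω → ℝ}
    (hZ : UpperEND P C Z) (hC1 : 1 ≤ C) (hC : C ≠ ∞) (hm : ∀ i, Measurable (Z i))
    (h0 : ∀ i ω, 0 ≤ Z i ω) (hid : ∀ i, ProbabilityTheory.IdentDistrib (Z i) (Z 0) P P)
    (hint : Integrable (Z 0) P) {c : ℝ} (hc : 1 < c) {ε : ℝ} (hε : 0 < ε) :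
    ∀ᵐ ω ∂P, ∀ᶠ k : ℕ in atTop,
      ∑ i ∈ Finset.range ⌊c ^ k⌋₊, Z i ω < ⌊c ^ k⌋₊ * (∫ ω, Z 0 ω ∂P + 6 * ε) := by
  have hc0 : 0 < c := by linarith
  have hmZ := hm 0
  have hb : ∀ k : ℕ, 0 < ε * c ^ k := fun k => by positivity
  have hY2 : ∀ k : ℕ, Integrable (fun ω => min (Z 0 ω) (ε * c ^ k) ^ 2) P := by
    intro k
    refine Integrable.of_bound (Measurable.aestronglyMeasurable (by fun_prop)) ((ε * c ^ k) ^ 2)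
      (Eventually.of_forall fun ω => ?_)
    rw [Real.norm_of_nonneg (sq_nonneg _)]
    exact pow_le_pow_left₀ (le_min (h0 0 ω) (hb k).le) (min_le_right _ _) 2
  let w : ℕ → ℝ := fun k => (∫ ω, min (Z 0 ω) (ε * c ^ k) ^ 2 ∂P) / (ε * c ^ k)
  have hw0 : ∀ k, 0 ≤ w k := fun k =>
    div_nonneg (integral_nonneg fun ω => sq_nonneg _) (hb k).le
  have hw : Summable w := by
    refine summable_of_sum_range_le (c := 4 * c / (c - 1) * ∫ ω, Z 0 ω ∂P) hw0 fun N => ?_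
    simp only [w]
    simp_rw [← integral_div]
    rw [← integral_finsetSum _ fun k _ => (hY2 k).div_const _, ← integral_const_mul]
    exact integral_mono (integrable_finsetSum _ fun k _ => (hY2 k).div_const _)
      (hint.const_mul _) fun ω => sum_min_geometric_sq_div_le (h0 0 ω) hε hc N
  have hv : Summable fun k => w k + c⁻¹ ^ k :=
    hw.add (summable_geometric_of_lt_one (by positivity) (inv_lt_one_of_one_lt₀ hc))
  have hbound : ∀ k : ℕ, P {ω | ⌊c ^ k⌋₊ * ∫ ω, Z 0 ω ∂P + 3 * (ε * c ^ k) ≤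
        ∑ i ∈ Finset.range ⌊c ^ k⌋₊, Z i ω} ≤
      (ENNReal.ofReal ε⁻¹ + C * ENNReal.ofReal (Real.exp ε⁻¹)) *
        ENNReal.ofReal (w k + c⁻¹ ^ k) := by
    intro k
    have hck : 0 < c⁻¹ ^ k := by positivity
    refine hZ.measure_sum_ge_le_truncated hC1 hm h0 hid hint (hb k)
      (add_pos_of_nonneg_of_pos (hw0 k) hck) ?_ ?_
    · rw [inv_mul_cancel_left₀ hε.ne']
      exact Nat.floor_le (by positivity)
    · rw [add_mul, div_mul_cancel₀ _ (hb k).ne']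
      exact le_add_of_nonneg_right (mul_pos hck (hb k)).le
  have hsum : ∑' k : ℕ, P {ω | ⌊c ^ k⌋₊ * ∫ ω, Z 0 ω ∂P + 3 * (ε * c ^ k) ≤
      ∑ i ∈ Finset.range ⌊c ^ k⌋₊, Z i ω} ≠ ∞ := by
    refine ne_top_of_le_ne_top ?_ (ENNReal.tsum_le_tsum hbound)
    rw [ENNReal.tsum_mul_left]
    exact ENNReal.mul_ne_top (ENNReal.add_ne_top.2 ⟨ENNReal.ofReal_ne_top,
      ENNReal.mul_ne_top hC ENNReal.ofReal_ne_top⟩) hv.tsum_ofReal_ne_top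
  filter_upwards [ae_eventually_notMem hsum] with ω hω
  filter_upwards [hω] with k hk
  simp only [not_le] at hk
  have h1 : c ^ k < ⌊c ^ k⌋₊ + 1 := Nat.lt_floor_add_one _
  have h2 : (1 : ℝ) ≤ ⌊c ^ k⌋₊ := by
    exact_mod_cast (Nat.one_le_floor_iff _).2 (one_le_pow₀ hc.le)
  nlinarith

/-- Strong law of large numbers for nonnegative extended negatively dependent variables. -/
lemma UpperEND.strong_law_of_nonneg [IsProbabilityMeasure P] {Z : ℕ → Ω → ℝ}
    (hZ : UpperEND P C Z) (hZ' : UpperEND P C fun i ω => -Z i ω) (hC1 : 1 ≤ C) (hC : C ≠ ∞)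
    (hm : ∀ i, Measurable (Z i)) (h0 : ∀ i ω, 0 ≤ Z i ω)
    (hid : ∀ i, ProbabilityTheory.IdentDistrib (Z i) (Z 0) P P) (hint : Integrable (Z 0) P) :
    ∀ᵐ ω ∂P, Tendsto (fun n : ℕ => (∑ i ∈ Finset.range n, Z i ω) / n) atTop
      (nhds (∫ ω, Z 0 ω ∂P)) := by
  obtain ⟨c, -, hc, hclim⟩ := exists_seq_strictAnti_tendsto (1 : ℝ)
  obtain ⟨e, -, he, helim⟩ := exists_seq_strictAnti_tendsto (0 : ℝ)
  have hlow := ae_all_iff.2 fun j : ℕ => hZ'.ae_eventually_lt_sum hC hm h0 hid hint (he j)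
  have hupp := ae_all_iff.2 fun p : ℕ => ae_all_iff.2 fun j : ℕ =>
    hZ.ae_eventually_sum_lt hC1 hC hm h0 hid hint (hc p) (he j)
  filter_upwards [hlow, hupp] with ω hl hu
  refine tendsto_div_of_monotone_of_tendsto_div_floor_pow
    (fun n => ∑ i ∈ Finset.range n, Z i ω) _ ?_ c hc hclim fun p => ?_
  · intro a b hab
    exact Finset.sum_le_sum_of_subset_of_nonneg (Finset.range_mono hab) fun i _ _ => h0 i ω
  have hfl : Tendsto (fun k : ℕ => ⌊c p ^ k⌋₊) atTop atTop :=
    tendsto_nat_floor_atTop.comp (tendsto_pow_atTop_atTop_of_one_lt (hc p))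
  have hpos : ∀ k : ℕ, (0 : ℝ) < ⌊c p ^ k⌋₊ := fun k => by
    exact_mod_cast (Nat.one_le_floor_iff _).2 (one_le_pow₀ (hc p).le)
  refine tendsto_order.2 ⟨fun y hy => ?_, fun y hy => ?_⟩
  · obtain ⟨j, hj⟩ := ((tendsto_order.1 helim).2 _ (sub_pos.2 hy)).exists
    filter_upwards [hfl.eventually (hl j)] with k hk
    rw [lt_div_iff₀ (hpos k)]
    nlinarith [hpos k]
  · obtain ⟨j, hj⟩ := ((tendsto_order.1 helim).2 ((y - ∫ ω, Z 0 ω ∂P) / 6) (by linarith)).exists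
    filter_upwards [hu p j] with k hk
    rw [div_lt_iff₀ (hpos k)]
    nlinarith [hpos k]

end

lemma ENDProb.upperEND_neg {Ω : Type} [MeasurableSpace Ω] {P : Measure Ω} {K : ℝ}
    {X : ℕ → Ω → ℝ} (h : ENDProb P K X) : UpperEND P (ENNReal.ofReal K) fun i ω => -X i ω := by
  intro n x
  have key : ∀ i, {ω | x i < -X i ω} =
      ⋃ m : ℕ, {ω | X i ω ≤ -x i - 1 / ((m : ℝ) + 1)} := by
    intro i
    ext ω
    simp only [Set.mem_iUnion, Set.mem_ofPred_eq]
    refine ⟨fun hω => ?_, fun ⟨m, hω⟩ => ?_⟩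
    · obtain ⟨m, hm⟩ := exists_nat_one_div_lt (sub_pos.2 hω)
      exact ⟨m, by linarith⟩
    · have : (0 : ℝ) < 1 / ((m : ℝ) + 1) := by positivity
      linarith
  simp_rw [key]
  refine measure_biInter_iUnion_le (fun i a b hab ω hω => ?_) fun m => (h n _).1
  have := Nat.one_div_le_one_div (α := ℝ) hab
  simp only [Set.mem_ofPred_eq] at hω ⊢
  linarith

/-- Corollary 4.6, direct part: strong law of large numbers for extended
negatively dependent, identically distributed random variables on a
probability space. -/
theorem stmt13 {Ω : Type} [MeasurableSpace Ω] (P : Measure Ω)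
    [IsProbabilityMeasure P] (X : ℕ → Ω → ℝ)
    (K : ℝ) (hK : 1 ≤ K)
    (hid : ∀ i, ProbabilityTheory.IdentDistrib (X i) (X 0) P P)
    (hEND : ENDProb P K X)
    (hint : Integrable (X 0) P) :
    P {ω | Tendsto (fun n : ℕ => (∑ k ∈ Finset.range n, X k ω) / n)
        atTop (nhds (∫ ω, X 0 ω ∂P))} = 1 := by
  have hXm : ∀ i, AEMeasurable (X i) P := fun i => (hid i).aemeasurable_fst
  let Y : ℕ → Ω → ℝ := fun i => (hXm i).mk (X i)
  have hYm : ∀ i, Measurable (Y i) := fun i => (hXm i).measurable_mk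
  have hXY : ∀ i, X i =ᵐ[P] Y i := fun i => (hXm i).ae_eq_mk
  have hYid : ∀ i, ProbabilityTheory.IdentDistrib (Y i) (Y 0) P P := fun i =>
    ((ProbabilityTheory.IdentDistrib.of_ae_eq (hXm i) (hXY i)).symm.trans (hid i)).trans
      (ProbabilityTheory.IdentDistrib.of_ae_eq (hXm 0) (hXY 0))
  have hYint : Integrable (Y 0) P := hint.congr (hXY 0)
  have hup : UpperEND P (ENNReal.ofReal K) Y :=
    UpperEND.congr_ae (fun n x => (hEND n x).2) hXY
  have hdown : UpperEND P (ENNReal.ofReal K) fun i ω => -Y i ω :=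
    hEND.upperEND_neg.congr_ae fun i => (hXY i).neg
  have hC1 : 1 ≤ ENNReal.ofReal K := ENNReal.one_le_ofReal.2 hK
  have hmax : Monotone fun y : ℝ => max y 0 := fun a b hab => max_le_max_right 0 hab
  have hmin : Monotone fun y : ℝ => min y 0 := fun a b hab => min_le_min_right 0 hab
  have hpos := UpperEND.strong_law_of_nonneg (Z := fun i ω => max (Y i ω) 0)
    (hup.comp_monotone hmax (by fun_prop))
    (by simpa [max_neg_neg, ← min_neg_neg] using hdown.comp_monotone hmin (by fun_prop))
    hC1 ENNReal.ofReal_ne_top (fun i => (hYm i).max measurable_const)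
    (fun i ω => le_max_right _ _)
    (fun i => (hYid i).comp (measurable_id.max measurable_const)) hYint.pos_part
  have hneg := UpperEND.strong_law_of_nonneg (Z := fun i ω => max (-Y i ω) 0)
    (hdown.comp_monotone hmax (by fun_prop))
    (by simpa [← min_neg_neg] using hup.comp_monotone hmin (by fun_prop))
    hC1 ENNReal.ofReal_ne_top (fun i => (hYm i).neg.max measurable_const)
    (fun i ω => le_max_right _ _)
    (fun i => (hYid i).comp (measurable_id.neg.max measurable_const)) hYint.neg_part
  have hsplit : ∀ y : ℝ, max y 0 - max (-y) 0 = y := max_zero_sub_max_neg_zero_eq_self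
  have hmean : ∫ ω, X 0 ω ∂P = ∫ ω, max (Y 0 ω) 0 ∂P - ∫ ω, max (-Y 0 ω) 0 ∂P := by
    rw [← integral_sub hYint.pos_part hYint.neg_part, integral_congr_ae (hXY 0)]
    simp_rw [hsplit]
  have hae : ∀ᵐ ω ∂P, Tendsto (fun n : ℕ => (∑ k ∈ Finset.range n, X k ω) / n)
      atTop (nhds (∫ ω, X 0 ω ∂P)) := by
    filter_upwards [hpos, hneg, ae_all_iff.2 hXY] with ω hp hn hω
    rw [hmean]
    refine (hp.sub hn).congr fun n => ?_
    rw [← sub_div, ← Finset.sum_sub_distrib]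
    simp_rw [hsplit, hω]
  rw [measure_congr (eventuallyEq_univ.2 hae), measure_univ]
end
end

section
/- Let X_1, X_2, … be identically distributed real random variables on a probability space (Ω, ℱ, P) which are extended negatively dependent with some dominating constant K ≥ 1, and set S_n = Σ_{k=1}^n X_k. If P( limsup_{n→∞} |S_n|/n = ∞ ) < 1, then E[|X_1|] < ∞. Furthermore, if P( S_n/n → μ ) > 0 for some real number μ, then E[|X_1|] < ∞, μ = E[X_1], and P( S_n/n → μ ) = 1. -/
open Filter MeasureTheory
open scoped ENNReal NNReal

noncomputable section

/-- Joint upper tails are dominated by `K` times the product of the marginal upper tails. -/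
def UpperDominated {Ω : Type*} [MeasurableSpace Ω] (P : Measure Ω) (K : ℝ≥0∞)
    (X : ℕ → Ω → ℝ) : Prop :=
  ∀ (n : ℕ) (x : ℕ → ℝ), P (⋂ i ∈ Finset.range n, {ω | x i < X i ω}) ≤
    K * ∏ i ∈ Finset.range n, P {ω | x i < X i ω}

section Dependence

variable {Ω : Type*} [MeasurableSpace Ω] {P : Measure Ω}

theorem measure_lt_comp_le {μ ν : Measure Ω} {Y : Ω → ℝ}
    (h : ∀ x, μ {ω | x < Y ω} ≤ ν {ω | x < Y ω}) {f : ℝ → ℝ} (hf : Monotone f)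
    (hfc : Continuous f) (t : ℝ) : μ {ω | t < f (Y ω)} ≤ ν {ω | t < f (Y ω)} := by
  have hU : {ω | t < f (Y ω)} = ⋃ q : {q : ℚ // t < f q}, {ω | (q : ℝ) < Y ω} := by
    ext ω
    simp only [Set.mem_ofPred_eq, Set.mem_iUnion, Subtype.exists, exists_prop]
    constructor
    · intro hω
      have ho : IsOpen {y | t < f y} := isOpen_lt continuous_const hfc
      obtain ⟨l, hl, hl'⟩ := exists_Ioc_subset_of_mem_nhds (ho.mem_nhds hω) ⟨Y ω - 1, by simp⟩
      obtain ⟨q, hq1, hq2⟩ := exists_rat_btwn hl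
      exact ⟨q, hl' ⟨hq1, hq2.le⟩, hq2⟩
    · rintro ⟨q, hq, hq'⟩
      exact hq.trans_le (hf hq'.le)
  have hdir : Directed (· ⊆ ·) fun q : {q : ℚ // t < f q} => {ω | (q : ℝ) < Y ω} := by
    intro a b
    rcases le_total a b with hab | hab
    · refine ⟨a, subset_rfl, fun ω hω => ?_⟩
      exact lt_of_le_of_lt (by exact_mod_cast hab) (Set.mem_ofPred.1 hω)
    · refine ⟨b, fun ω hω => ?_, subset_rfl⟩
      exact lt_of_le_of_lt (by exact_mod_cast hab) (Set.mem_ofPred.1 hω)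
  rw [hU, hdir.measure_iUnion]
  exact iSup_le fun q => (h q).trans (measure_mono (Set.subset_iUnion_of_subset q subset_rfl))

theorem lintegral_mul_comp_le [SFinite P] {Y : Ω → ℝ} (hY : AEMeasurable Y P) {W : Ω → ℝ≥0∞}
    (hW : AEMeasurable W P) {C : ℝ≥0∞}
    (h : ∀ x, ∫⁻ ω, W ω * {ω | x < Y ω}.indicator 1 ω ∂P ≤ C * P {ω | x < Y ω})
    {f : ℝ → ℝ} (hf : Monotone f) (hfc : Continuous f) (hf0 : 0 ≤ f) :
    ∫⁻ ω, W ω * ENNReal.ofReal (f (Y ω)) ∂P ≤ C * ∫⁻ ω, ENNReal.ofReal (f (Y ω)) ∂P := by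
  have hac : P.withDensity W ≪ P := withDensity_absolutelyContinuous P W
  have hfY : AEMeasurable (fun ω => f (Y ω)) P := hfc.measurable.comp_aemeasurable hY
  have hset : ∀ x, P.withDensity W {ω | x < Y ω} ≤ (C • P) {ω | x < Y ω} := by
    intro x
    have hx : NullMeasurableSet {ω | x < Y ω} P := nullMeasurableSet_lt aemeasurable_const hY
    rw [withDensity_apply', ← lintegral_indicator₀ hx]
    refine le_trans (le_of_eq (lintegral_congr fun ω => ?_)) (h x)
    by_cases hω : ω ∈ {ω | x < Y ω} <;> simp [hω]
  calc ∫⁻ ω, W ω * ENNReal.ofReal (f (Y ω)) ∂P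
      = ∫⁻ ω, ENNReal.ofReal (f (Y ω)) ∂(P.withDensity W) := by
        rw [lintegral_withDensity_eq_lintegral_mul₀ hW hfY.ennreal_ofReal]
        rfl
    _ = ∫⁻ t in Set.Ioi 0, P.withDensity W {ω | t < f (Y ω)} :=
        lintegral_eq_lintegral_meas_lt _ (ae_of_all _ fun ω => hf0 _) (hfY.mono_ac hac)
    _ ≤ ∫⁻ t in Set.Ioi 0, (C • P) {ω | t < f (Y ω)} :=
        lintegral_mono fun t => measure_lt_comp_le hset hf hfc t
    _ = ∫⁻ ω, ENNReal.ofReal (f (Y ω)) ∂(C • P) :=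
        (lintegral_eq_lintegral_meas_lt (f := fun ω => f (Y ω)) _ (ae_of_all _ fun ω => hf0 _)
          (hfY.smul_measure C)).symm
    _ = C * ∫⁻ ω, ENNReal.ofReal (f (Y ω)) ∂P := by rw [lintegral_smul_measure, smul_eq_mul]

theorem UpperDominated.lintegral_prod_le_of_mixed [SFinite P] {K : ℝ≥0∞} {X : ℕ → Ω → ℝ}
    (hX : UpperDominated P K X) (hm : ∀ i, AEMeasurable (X i) P) {f : ℕ → ℝ → ℝ}
    (hf : ∀ i, Monotone (f i)) (hfc : ∀ i, Continuous (f i)) (hf0 : ∀ i, 0 ≤ f i) (n : ℕ)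
    (s : Finset ℕ) (g : ℕ → Ω → ℝ≥0∞)
    (hgs : ∀ i ∈ s, g i = fun ω => ENNReal.ofReal (f i (X i ω)))
    (hgn : ∀ i ∉ s, ∃ x : ℝ, g i = {ω | x < X i ω}.indicator 1) :
    ∫⁻ ω, ∏ i ∈ Finset.range n, g i ω ∂P ≤ K * ∏ i ∈ Finset.range n, ∫⁻ ω, g i ω ∂P := by
  have hset : ∀ i (x : ℝ), NullMeasurableSet {ω | x < X i ω} P := fun i x =>
    nullMeasurableSet_lt aemeasurable_const (hm i)
  induction s using Finset.induction_on generalizing g with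
  | empty =>
    choose x hx using fun i => hgn i (Finset.notMem_empty i)
    have h1 : ∀ ω, ∏ i ∈ Finset.range n, g i ω
        = (⋂ i ∈ Finset.range n, {ω | x i < X i ω}).indicator 1 ω := by
      intro ω
      simp only [hx]
      by_cases hω : ω ∈ ⋂ i ∈ Finset.range n, {ω | x i < X i ω}
      · rw [Set.indicator_of_mem hω]
        refine Finset.prod_eq_one fun i hi => ?_
        rw [Set.indicator_of_mem (Set.mem_iInter₂.1 hω i hi)]
        rfl
      · rw [Set.indicator_of_notMem hω]
        simp only [Set.mem_iInter, not_forall] at hω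
        obtain ⟨i, hi, hi'⟩ := hω
        exact Finset.prod_eq_zero hi (Set.indicator_of_notMem hi' _)
    have hI : NullMeasurableSet (⋂ i ∈ Finset.range n, {ω | x i < X i ω}) P :=
      Finset.nullMeasurableSet_biInter _ fun i _ => hset i (x i)
    simp_rw [h1]
    rw [lintegral_indicator_one₀ hI]
    refine (hX n x).trans (le_of_eq ?_)
    congr 1
    refine Finset.prod_congr rfl fun i _ => ?_
    rw [hx, lintegral_indicator_one₀ (hset i _)]
  | insert j s hj ih =>
    have hgm : ∀ i, AEMeasurable (g i) P := by
      intro i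
      by_cases hi : i ∈ insert j s
      · rw [hgs i hi]
        exact ((hfc i).measurable.comp_aemeasurable (hm i)).ennreal_ofReal
      · obtain ⟨x, hx⟩ := hgn i hi
        rw [hx]
        exact aemeasurable_one.indicator₀ (hset i x)
    have hup : ∀ x : ℝ, ∫⁻ ω, ∏ i ∈ Finset.range n,
          (Function.update g j ({ω | x < X j ω}.indicator 1)) i ω ∂P
        ≤ K * ∏ i ∈ Finset.range n,
          ∫⁻ ω, (Function.update g j ({ω | x < X j ω}.indicator 1)) i ω ∂P := by
      intro x
      refine ih _ (fun i hi => ?_) fun i hi => ?_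
      · rw [Function.update_of_ne (by rintro rfl; exact hj hi)]
        exact hgs i (Finset.mem_insert_of_mem hi)
      · by_cases hij : i = j
        · subst hij
          exact ⟨x, by simp⟩
        · rw [Function.update_of_ne hij]
          exact hgn i (by simp [hij, hi])
    by_cases hjn : j ∈ Finset.range n
    · have hrest : ∀ (x : ℝ) (i), i ∈ (Finset.range n).erase j →
          Function.update g j ({ω | x < X j ω}.indicator 1) i = g i := fun x i hi =>
        Function.update_of_ne (Finset.ne_of_mem_erase hi) _ _
      have hmain := lintegral_mul_comp_le (hm j)
        (W := fun ω => ∏ i ∈ (Finset.range n).erase j, g i ω)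
        (C := K * ∏ i ∈ (Finset.range n).erase j, ∫⁻ ω, g i ω ∂P)
        (Finset.aemeasurable_fun_prod _ fun i _ => hgm i) (fun x => ?_) (hf j) (hfc j) (hf0 j)
      · rw [← Finset.prod_erase_mul _ _ hjn, ← mul_assoc, hgs j (Finset.mem_insert_self j s)]
        refine le_trans (le_of_eq (lintegral_congr fun ω => ?_)) hmain
        rw [← Finset.prod_erase_mul _ _ hjn, hgs j (Finset.mem_insert_self j s)]
      · have := hup x
        rw [← Finset.prod_erase_mul _ _ hjn, ← mul_assoc] at this
        simp_rw [← Finset.prod_erase_mul _ _ hjn] at this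
        rw [Function.update_self, lintegral_indicator_one₀ (hset j x)] at this
        convert this using 4
        · exact Finset.prod_congr rfl fun i hi => by rw [hrest x i hi]
        · rw [hrest x _ ‹_›]
    · have hrest : ∀ i ∈ Finset.range n,
          Function.update g j ({ω | (0 : ℝ) < X j ω}.indicator 1) i = g i := fun i hi =>
        Function.update_of_ne (by rintro rfl; exact hjn hi) _ _
      convert hup 0 using 3
      · exact Finset.prod_congr rfl fun i hi => by rw [hrest i hi]
      · rw [hrest _ ‹_›]

/-- Products of nonnegative continuous nondecreasing functions of the variables. -/
theorem UpperDominated.lintegral_prod_le [SFinite P] {K : ℝ≥0∞} {X : ℕ → Ω → ℝ}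
    (hX : UpperDominated P K X) (hm : ∀ i, AEMeasurable (X i) P) {f : ℕ → ℝ → ℝ}
    (hf : ∀ i, Monotone (f i)) (hfc : ∀ i, Continuous (f i)) (hf0 : ∀ i, 0 ≤ f i) (n : ℕ) :
    ∫⁻ ω, ∏ i ∈ Finset.range n, ENNReal.ofReal (f i (X i ω)) ∂P
      ≤ K * ∏ i ∈ Finset.range n, ∫⁻ ω, ENNReal.ofReal (f i (X i ω)) ∂P := by
  have := hX.lintegral_prod_le_of_mixed hm hf hfc hf0 n (Finset.range n)
    (fun i => if i ∈ Finset.range n then fun ω => ENNReal.ofReal (f i (X i ω))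
      else {ω | (0 : ℝ) < X i ω}.indicator 1)
    (fun i hi => if_pos hi) (fun i hi => ⟨0, if_neg hi⟩)
  convert this using 3
  · exact Finset.prod_congr rfl fun i hi => by rw [if_pos hi]
  · rw [if_pos ‹_›]

/-- Domination of lower tails gives domination of the upper tails of the negatives. -/
theorem upperDominated_neg {K : ℝ≥0∞} {X : ℕ → Ω → ℝ}
    (hX : ∀ (n : ℕ) (x : ℕ → ℝ), P (⋂ i ∈ Finset.range n, {ω | X i ω ≤ x i}) ≤
      K * ∏ i ∈ Finset.range n, P {ω | X i ω ≤ x i}) :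
    UpperDominated P K fun i ω => -X i ω := by
  intro n x
  have hle : ∀ (k : ℕ) i, {ω | X i ω ≤ -x i - 1 / ((k : ℝ) + 1)} ⊆ {ω | x i < -X i ω} := by
    intro k i ω hω
    have h1 : (0 : ℝ) < 1 / ((k : ℝ) + 1) := by positivity
    simp only [Set.mem_ofPred_eq] at hω ⊢
    linarith
  have hmono : Monotone fun k : ℕ =>
      ⋂ i ∈ Finset.range n, {ω | X i ω ≤ -x i - 1 / ((k : ℝ) + 1)} := by
    intro a b hab
    refine Set.iInter₂_mono fun i _ ω hω => ?_
    have h1 : 1 / ((b : ℝ) + 1) ≤ 1 / ((a : ℝ) + 1) := Nat.one_div_le_one_div hab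
    simp only [Set.mem_ofPred_eq] at hω ⊢
    linarith
  have hU : (⋂ i ∈ Finset.range n, {ω | x i < -X i ω})
      ⊆ ⋃ k : ℕ, ⋂ i ∈ Finset.range n, {ω | X i ω ≤ -x i - 1 / ((k : ℝ) + 1)} := by
    intro ω hω
    simp only [Set.mem_iInter, Set.mem_ofPred_eq] at hω
    have hev : ∀ i ∈ Finset.range n, ∀ᶠ k : ℕ in atTop, 1 / ((k : ℝ) + 1) < -X i ω - x i :=
      fun i hi => tendsto_one_div_add_atTop_nhds_zero_nat.eventually_lt_const
        (by linarith [hω i hi])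
    obtain ⟨k, hk⟩ := ((Filter.eventually_all_finset _).2 hev).exists
    refine Set.mem_iUnion.2 ⟨k, Set.mem_iInter₂.2 fun i hi => ?_⟩
    have := hk i hi
    simp only [Set.mem_ofPred_eq]
    linarith
  refine (measure_mono hU).trans ?_
  rw [hmono.measure_iUnion]
  refine iSup_le fun k => (hX n _).trans ?_
  gcongr with i _ ω
  exact fun hω => hle k i hω

end Dependence

section BorelCantelli

theorem ofReal_le_mul_one_add_tsum_indicator {Ω : Type*} {M : ℝ} (hM : 0 < M) (Y : Ω → ℝ) (ω : Ω) :
    ENNReal.ofReal (Y ω) ≤ ENNReal.ofReal M *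
      (1 + ∑' i : ℕ, {ω | M * (i + 1) ≤ Y ω}.indicator (1 : Ω → ℝ≥0∞) ω) := by
  set N := ⌊Y ω / M⌋₊
  have hN : (N : ℝ≥0∞) ≤ ∑' i : ℕ, {ω | M * (i + 1) ≤ Y ω}.indicator (1 : Ω → ℝ≥0∞) ω := by
    calc (N : ℝ≥0∞) = ∑ i ∈ Finset.range N,
          {ω | M * (i + 1) ≤ Y ω}.indicator (1 : Ω → ℝ≥0∞) ω := by
          rw [Finset.sum_congr rfl (g := fun _ => (1 : ℝ≥0∞))]
          · simp
          · intro i hi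
            refine Set.indicator_of_mem ?_ _
            have h1 : i + 1 ≤ N := Finset.mem_range.1 hi
            have h2 : ((i + 1 : ℕ) : ℝ) ≤ Y ω / M := (Nat.le_floor_iff' (by omega)).1 h1
            rw [le_div_iff₀ hM] at h2
            push_cast at h2
            simp only [Set.mem_ofPred_eq]
            linarith
      _ ≤ _ := ENNReal.sum_le_tsum _
  calc ENNReal.ofReal (Y ω) ≤ ENNReal.ofReal (M * (1 + N)) := by
        refine ENNReal.ofReal_le_ofReal ?_
        have := (Nat.lt_floor_add_one (Y ω / M)).le
        rw [div_le_iff₀ hM] at this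
        linarith
    _ = ENNReal.ofReal M * (1 + N) := by
        rw [ENNReal.ofReal_mul hM.le, ENNReal.ofReal_add zero_le_one (by positivity)]
        simp
    _ ≤ _ := by gcongr

variable {Ω : Type*} [MeasurableSpace Ω] {P : Measure Ω}

theorem UpperDominated.lintegral_neg_lt_top [IsProbabilityMeasure P] {K : ℝ} {X : ℕ → Ω → ℝ}
    (hX : UpperDominated P (ENNReal.ofReal K) X)
    (hid : ∀ i, ProbabilityTheory.IdentDistrib (X i) (X 0) P P) {M : ℝ} (hM : 0 < M)
    (hpos : P {ω | ∀ i : ℕ, -(M * (i + 1)) < X i ω} ≠ 0) :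
    ∫⁻ ω, ENNReal.ofReal (-X 0 ω) ∂P < ∞ := by
  have hm : AEMeasurable (X 0) P := (hid 0).aemeasurable_fst
  have hset : ∀ i : ℕ, NullMeasurableSet {ω | M * (i + 1) ≤ -X 0 ω} P := fun i =>
    nullMeasurableSet_le aemeasurable_const hm.neg
  set p : ℕ → ℝ := fun i => P.real {ω | M * (i + 1) ≤ -X 0 ω} with hp
  have hp0 : ∀ i, 0 ≤ p i := fun i => measureReal_nonneg
  have htail : ∀ i : ℕ, P {ω | -(M * (i + 1)) < X i ω} ≤ ENNReal.ofReal (Real.exp (-p i)) := by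
    intro i
    have h1 : P {ω | -(M * (i + 1)) < X i ω} = P {ω | -(M * (i + 1)) < X 0 ω} :=
      (hid i).measure_mem_eq measurableSet_Ioi
    have h2 : {ω | -(M * (i + 1)) < X 0 ω} = {ω | M * (i + 1) ≤ -X 0 ω}ᶜ := by
      ext ω
      simp only [Set.mem_ofPred_eq, Set.mem_compl_iff, not_le]
      constructor <;> intro h <;> linarith
    rw [h1, h2, ← ofReal_measureReal]
    refine ENNReal.ofReal_le_ofReal ?_
    rw [probReal_compl_eq_one_sub₀ (hset i)]
    exact Real.one_sub_le_exp_neg _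
  set q := P.real {ω | ∀ i : ℕ, -(M * (i + 1)) < X i ω} with hq
  have hq0 : 0 < q := ENNReal.toReal_pos hpos (measure_ne_top _ _)
  have hbound : ∀ n, ∑ i ∈ Finset.range n, p i ≤ Real.log (K / q) := by
    intro n
    have h1 : ENNReal.ofReal q ≤ ENNReal.ofReal (K * Real.exp (-∑ i ∈ Finset.range n, p i)) := by
      rw [hq, ofReal_measureReal, ENNReal.ofReal_mul' (Real.exp_nonneg _),
        ← Finset.sum_neg_distrib, Real.exp_sum,
        ENNReal.ofReal_prod_of_nonneg fun i _ => Real.exp_nonneg _]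
      calc P {ω | ∀ i : ℕ, -(M * (i + 1)) < X i ω}
          ≤ P (⋂ i ∈ Finset.range n, {ω | -(M * (i + 1)) < X i ω}) :=
            measure_mono fun ω hω => Set.mem_iInter₂.2 fun i _ => hω i
        _ ≤ _ := hX n fun i => -(M * (i + 1))
        _ ≤ _ := by
          gcongr with i _
          exact htail i
    have h2 : q ≤ K * Real.exp (-∑ i ∈ Finset.range n, p i) := by
      by_contra! hlt
      exact absurd h1 (not_le.2 ((ENNReal.ofReal_lt_ofReal_iff hq0).2 hlt))
    have hK : 0 < K := by
      by_contra! hK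
      nlinarith [Real.exp_pos (-∑ i ∈ Finset.range n, p i)]
    rw [Real.exp_neg, ← div_eq_mul_inv, le_div_iff₀ (Real.exp_pos _)] at h2
    rw [Real.le_log_iff_exp_le (by positivity), le_div_iff₀ hq0]
    linarith
  have hsum : Summable p := summable_of_sum_range_le hp0 hbound
  calc ∫⁻ ω, ENNReal.ofReal (-X 0 ω) ∂P
      ≤ ∫⁻ ω, ENNReal.ofReal M *
        (1 + ∑' i : ℕ, {ω | M * (i + 1) ≤ -X 0 ω}.indicator (1 : Ω → ℝ≥0∞) ω) ∂P :=
        lintegral_mono fun ω => ofReal_le_mul_one_add_tsum_indicator hM (fun ω => -X 0 ω) ω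
    _ = ENNReal.ofReal M * (1 + ∑' i : ℕ, ENNReal.ofReal (p i)) := by
        have hmi : ∀ i : ℕ, AEMeasurable
            ({ω | M * (i + 1) ≤ -X 0 ω}.indicator (1 : Ω → ℝ≥0∞)) P := fun i =>
          aemeasurable_one.indicator₀ (hset i)
        rw [lintegral_const_mul' _ _ ENNReal.ofReal_ne_top, lintegral_add_left measurable_const,
          lintegral_tsum hmi]
        simp [hp, lintegral_indicator_one₀ (hset _)]
    _ < ∞ := ENNReal.mul_lt_top ENNReal.ofReal_lt_top
        (ENNReal.add_lt_top.2 ⟨ENNReal.one_lt_top, hsum.tsum_ofReal_lt_top⟩)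

theorem exists_forall_abs_lt_of_limsup_ne_top {x : ℕ → ℝ}
    (h : limsup (fun n : ℕ => ((|∑ k ∈ Finset.range n, x k| / n : ℝ) : EReal)) atTop ≠ ⊤) :
    ∃ M : ℕ, ∀ i : ℕ, |x i| < ((M : ℝ) + 1) * (i + 1) := by
  obtain ⟨B, hB, -⟩ := EReal.lt_iff_exists_real_btwn.1 (lt_top_iff_ne_top.2 h)
  obtain ⟨N, hN⟩ := eventually_atTop.1 (eventually_lt_of_limsup_lt hB)
  set C := |B| + ∑ n ∈ Finset.range N, |∑ k ∈ Finset.range n, x k|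
  have hS : ∀ n : ℕ, |∑ k ∈ Finset.range n, x k| ≤ C * n := by
    intro n
    rcases Nat.eq_zero_or_pos n with rfl | hn
    · simp
    have hn' : (1 : ℝ) ≤ n := by exact_mod_cast hn
    have hsum0 : 0 ≤ ∑ n ∈ Finset.range N, |∑ k ∈ Finset.range n, x k| :=
      Finset.sum_nonneg fun i _ => abs_nonneg _
    rcases lt_or_ge n N with hnN | hnN
    · have h1 : |∑ k ∈ Finset.range n, x k| ≤ ∑ n ∈ Finset.range N, |∑ k ∈ Finset.range n, x k| :=
        Finset.single_le_sum (f := fun n => |∑ k ∈ Finset.range n, x k|)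
          (fun i _ => abs_nonneg _) (Finset.mem_range.2 hnN)
      nlinarith [abs_nonneg B]
    · have h1 : |∑ k ∈ Finset.range n, x k| / n < B := by exact_mod_cast hN n hnN
      rw [div_lt_iff₀ (by linarith)] at h1
      nlinarith [le_abs_self B]
  have hC0 : 0 ≤ C := by positivity
  obtain ⟨M, hM⟩ := exists_nat_gt (2 * C)
  refine ⟨M, fun i => ?_⟩
  have h1 := hS (i + 1)
  have h2 := hS i
  rw [Finset.sum_range_succ] at h1
  push_cast at h1
  have h3 : |x i| ≤ C * (i + 1) + C * i := by
    calc |x i| = |(∑ k ∈ Finset.range i, x k + x i) - ∑ k ∈ Finset.range i, x k| := by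
          congr 1; ring
      _ ≤ _ := abs_sub _ _
      _ ≤ _ := add_le_add h1 h2
  have hi : (0 : ℝ) ≤ i := i.cast_nonneg
  nlinarith

theorem integrable_of_not_ae_limsup_eq_top [IsProbabilityMeasure P] {K : ℝ} {X : ℕ → Ω → ℝ}
    (hX : UpperDominated P (ENNReal.ofReal K) X)
    (hX' : UpperDominated P (ENNReal.ofReal K) fun i ω => -X i ω)
    (hid : ∀ i, ProbabilityTheory.IdentDistrib (X i) (X 0) P P)
    (h : ¬ ∀ᵐ ω ∂P, limsup (fun n : ℕ =>
      ((|∑ k ∈ Finset.range n, X k ω| / n : ℝ) : EReal)) atTop = ⊤) :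
    Integrable (X 0) P := by
  have hex : ∃ M : ℕ, P {ω | ∀ i : ℕ, |X i ω| < ((M : ℝ) + 1) * (i + 1)} ≠ 0 := by
    by_contra! hcon
    refine h ?_
    have hall : ∀ᵐ ω ∂P, ∀ M : ℕ, ¬ ∀ i : ℕ, |X i ω| < ((M : ℝ) + 1) * (i + 1) :=
      ae_all_iff.2 fun M => by simpa [ae_iff] using hcon M
    filter_upwards [hall] with ω hω
    by_contra hne
    obtain ⟨M, hM⟩ := exists_forall_abs_lt_of_limsup_ne_top hne
    exact hω M hM
  obtain ⟨M, hM⟩ := hex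
  have hM0 : (0 : ℝ) < (M : ℝ) + 1 := by positivity
  have h1 := hX.lintegral_neg_lt_top hid hM0 fun h0 => hM <| measure_mono_null
    (fun ω hω i => (abs_lt.1 (hω i)).1) h0
  have h2 := hX'.lintegral_neg_lt_top (fun i => (hid i).comp measurable_neg) hM0
    fun h0 => hM <| measure_mono_null
      (fun ω hω i => neg_lt_neg (abs_lt.1 (hω i)).2) h0
  simp only [neg_neg] at h2
  refine ⟨(hid 0).aemeasurable_fst.aestronglyMeasurable, ?_⟩
  rw [← hasFiniteIntegral_norm_iff,
    hasFiniteIntegral_iff_ofReal (ae_of_all _ fun ω => norm_nonneg _)]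
  calc ∫⁻ ω, ENNReal.ofReal ‖X 0 ω‖ ∂P
      ≤ ∫⁻ ω, (ENNReal.ofReal (X 0 ω) + ENNReal.ofReal (-X 0 ω)) ∂P := by
        refine lintegral_mono fun ω => ?_
        rcases abs_cases (X 0 ω) with ⟨h, -⟩ | ⟨h, -⟩ <;> simp [Real.norm_eq_abs, h]
    _ = _ := lintegral_add_left' (hid 0).aemeasurable_fst.ennreal_ofReal _
    _ < ∞ := ENNReal.add_lt_top.2 ⟨h2, h1⟩

end BorelCantelli

theorem exp_le_one_add_add_sq_mul_exp {x : ℝ} (hx : 0 ≤ x) :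
    Real.exp x ≤ 1 + x + x ^ 2 * Real.exp x := by
  have h1 : 1 - x ≤ Real.exp (-x) := Real.one_sub_le_exp_neg x
  have h2 : Real.exp x * Real.exp (-x) = 1 := by rw [← Real.exp_add]; simp
  have h3 : Real.exp x - 1 ≤ x * Real.exp x := by nlinarith [Real.exp_pos x]
  nlinarith

theorem min_sq_div_le_telescope {z a c : ℝ} (hz : 0 ≤ z) (ha : 0 < a) (hc : 1 < c) :
    min z a ^ 2 / a ≤ 4 * c / (c - 1) * (z ^ 2 / (z + a) - z ^ 2 / (z + c * a)) := by
  have hca : 0 < c * a := by positivity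
  have hc' : 0 < c - 1 := by linarith
  have hm0 : 0 ≤ min z a := le_min hz ha.le
  have hm : min z a * (z + a) ≤ 2 * z * a := by
    nlinarith [min_le_left z a, min_le_right z a]
  have h1 : min z a ^ 2 / a ≤ 4 * z ^ 2 * a / (z + a) ^ 2 := by
    rw [div_le_div_iff₀ ha (by positivity)]
    have : (min z a * (z + a)) ^ 2 ≤ (2 * z * a) ^ 2 := pow_le_pow_left₀ (by positivity) hm 2
    nlinarith
  have h2 : 4 * c / (c - 1) * (z ^ 2 / (z + a) - z ^ 2 / (z + c * a))
      = 4 * z ^ 2 * a * c / ((z + a) * (z + c * a)) := by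
    have : z + a ≠ 0 := by positivity
    have : z + c * a ≠ 0 := by positivity
    field_simp
    ring
  rw [h2]
  refine h1.trans ?_
  rw [div_le_div_iff₀ (by positivity) (by positivity)]
  have h3 : z + c * a ≤ c * (z + a) := by nlinarith
  have h4 : 0 ≤ 4 * z ^ 2 * a * (z + a) := by positivity
  nlinarith [mul_le_mul_of_nonneg_left h3 h4]

theorem sum_min_sq_div_pow_le {z c : ℝ} (hz : 0 ≤ z) (hc : 1 < c) (n : ℕ) :
    ∑ k ∈ Finset.range n, min z (c ^ k) ^ 2 / c ^ k ≤ 4 * c / (c - 1) * z := by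
  have hc0 : 0 < c := by linarith
  have hc' : 0 < c - 1 := by linarith
  calc ∑ k ∈ Finset.range n, min z (c ^ k) ^ 2 / c ^ k
      ≤ ∑ k ∈ Finset.range n,
        4 * c / (c - 1) * (z ^ 2 / (z + c ^ k) - z ^ 2 / (z + c ^ (k + 1))) := by
        refine Finset.sum_le_sum fun k _ => ?_
        rw [pow_succ' c k]
        exact min_sq_div_le_telescope hz (by positivity) hc
    _ = 4 * c / (c - 1) * (z ^ 2 / (z + 1) - z ^ 2 / (z + c ^ n)) := by
        rw [← Finset.mul_sum, Finset.sum_range_sub' fun k => z ^ 2 / (z + c ^ k), pow_zero]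
    _ ≤ 4 * c / (c - 1) * z := by
        refine mul_le_mul_of_nonneg_left ?_ (by positivity)
        have h1 : z ^ 2 / (z + 1) ≤ z := by
          rw [div_le_iff₀ (by positivity)]
          nlinarith
        have h2 : 0 ≤ z ^ 2 / (z + c ^ n) := by positivity
        linarith

section Tail

variable {Ω : Type*} [MeasurableSpace Ω] {P : Measure Ω} [IsProbabilityMeasure P]

theorem integrable_min_sq {Y : Ω → ℝ} (hY : AEMeasurable Y P) (hY0 : 0 ≤ Y) {a : ℝ} (ha : 0 ≤ a) :
    Integrable (fun ω => min (Y ω) a ^ 2) P := by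
  refine Integrable.of_bound ((hY.min aemeasurable_const).pow_const 2).aestronglyMeasurable (a ^ 2)
    (ae_of_all _ fun ω => ?_)
  rw [Real.norm_of_nonneg (by positivity)]
  exact pow_le_pow_left₀ (le_min (hY0 ω) ha) (min_le_right _ _) 2

theorem lintegral_exp_mul_min_le {Y : Ω → ℝ} (hY : Integrable Y P) (hY0 : 0 ≤ Y) {a b s L : ℝ}
    (hs : 0 ≤ s) (hb : 0 ≤ b) (hba : b ≤ a) (hL : s * b ≤ L) :
    ∫⁻ ω, ENNReal.ofReal (Real.exp (s * min (Y ω) b)) ∂P ≤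
      ENNReal.ofReal (Real.exp (s * ∫ ω, Y ω ∂P
        + s ^ 2 * Real.exp L * ∫ ω, min (Y ω) a ^ 2 ∂P)) := by
  have hsq := integrable_min_sq hY.aemeasurable hY0 (hb.trans hba)
  have hlin : Integrable (fun ω => 1 + s * Y ω) P := (integrable_const 1).add (hY.const_mul s)
  have hint : Integrable
      (fun ω => (1 + s * Y ω) + s ^ 2 * Real.exp L * min (Y ω) a ^ 2) P :=
    hlin.add (hsq.const_mul _)
  have hpt : ∀ ω, Real.exp (s * min (Y ω) b)
      ≤ (1 + s * Y ω) + s ^ 2 * Real.exp L * min (Y ω) a ^ 2 := by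
    intro ω
    have hm0 : 0 ≤ min (Y ω) b := le_min (hY0 ω) hb
    have h1 := exp_le_one_add_add_sq_mul_exp (mul_nonneg hs hm0)
    have h2 : s * min (Y ω) b ≤ s * Y ω := mul_le_mul_of_nonneg_left (min_le_left _ _) hs
    have h3 : Real.exp (s * min (Y ω) b) ≤ Real.exp L :=
      Real.exp_le_exp.2 ((mul_le_mul_of_nonneg_left (min_le_right _ _) hs).trans hL)
    have h4 : min (Y ω) b ^ 2 ≤ min (Y ω) a ^ 2 :=
      pow_le_pow_left₀ hm0 (min_le_min_left _ hba) 2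
    have h5 : (s * min (Y ω) b) ^ 2 * Real.exp (s * min (Y ω) b)
        ≤ (s ^ 2 * min (Y ω) a ^ 2) * Real.exp L := by
      rw [mul_pow]
      gcongr
    linarith
  calc ∫⁻ ω, ENNReal.ofReal (Real.exp (s * min (Y ω) b)) ∂P
      ≤ ∫⁻ ω, ENNReal.ofReal ((1 + s * Y ω) + s ^ 2 * Real.exp L * min (Y ω) a ^ 2) ∂P :=
        lintegral_mono fun ω => ENNReal.ofReal_le_ofReal (hpt ω)
    _ = ENNReal.ofReal (∫ ω, ((1 + s * Y ω) + s ^ 2 * Real.exp L * min (Y ω) a ^ 2) ∂P) :=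
        (ofReal_integral_eq_lintegral_ofReal hint
          (ae_of_all _ fun ω => (Real.exp_nonneg _).trans (hpt ω))).symm
    _ ≤ _ := by
        refine ENNReal.ofReal_le_ofReal ?_
        rw [integral_add hlin (hsq.const_mul _),
          integral_add (integrable_const 1) (hY.const_mul s), integral_const_mul,
          integral_const_mul, integral_const, probReal_univ, one_smul]
        refine le_trans (le_of_eq ?_) (Real.add_one_le_exp _)
        ring

theorem measure_sum_min_gt_le {K : ℝ} (hK : 1 ≤ K) {Z : ℕ → Ω → ℝ} (hZ0 : ∀ i, 0 ≤ Z i)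
    (hm : ∀ i, AEMeasurable (Z i) P) (hint : Integrable (Z 0) P)
    (hexp : ∀ s, 0 ≤ s → ∀ b n, ∫⁻ ω, ENNReal.ofReal
        (Real.exp (s * ∑ i ∈ Finset.range n, min (Z i ω) b)) ∂P
      ≤ ENNReal.ofReal K * (∫⁻ ω, ENNReal.ofReal (Real.exp (s * min (Z 0 ω) b)) ∂P) ^ n)
    {δ : ℝ} (hδ : 0 < δ) (hδ1 : δ ≤ 1) {a : ℝ} (ha : 1 ≤ a) {n : ℕ} (han : a ≤ n) :
    P {ω | (n : ℝ) * (∫ ω, Z 0 ω ∂P + 2 * δ) < ∑ i ∈ Finset.range n, min (Z i ω) (δ * a)} ≤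
      ENNReal.ofReal (K * Real.exp (2 / δ ^ 2)
        * (∫ ω, min (Z 0 ω) a ^ 2 / a ∂P + 1 / a)) := by
  have ha0 : 0 < a := by linarith
  have hn0 : (0 : ℝ) < n := by linarith
  set m := ∫ ω, Z 0 ω ∂P
  set v := ∫ ω, min (Z 0 ω) a ^ 2 / a ∂P with hv
  have hv0 : 0 ≤ v := integral_nonneg fun ω => by positivity
  have hV : ∫ ω, min (Z 0 ω) a ^ 2 ∂P = a * v := by
    rw [hv, integral_div]
    field_simp
  set w := v + 1 / a
  have hvw : v ≤ w := le_add_of_nonneg_right (by positivity)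
  have hw0 : 0 < w := by positivity
  rcases le_or_gt 1 w with hw1 | hw1
  · refine prob_le_one.trans (ENNReal.one_le_ofReal.2 ?_)
    have h1 : 1 ≤ Real.exp (2 / δ ^ 2) := Real.one_le_exp (by positivity)
    have h2 : 1 ≤ K * Real.exp (2 / δ ^ 2) := one_le_mul_of_one_le_of_one_le hK h1
    exact one_le_mul_of_one_le_of_one_le h2 hw1
  set l := -Real.log w / (2 * δ) with hl
  have hl0 : 0 ≤ l := div_nonneg (neg_nonneg.2 (Real.log_nonpos hw0.le hw1.le)) (by positivity)
  have hexpl : Real.exp (l * δ) * Real.exp (l * δ) = w⁻¹ := by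
    rw [← Real.exp_add, ← Real.exp_log (inv_pos.2 hw0), Real.log_inv, hl]
    congr 1
    field_simp
    ring
  have hneg : Real.exp (-(l * (2 * δ))) = w := by
    rw [hl]
    have : -(-Real.log w / (2 * δ) * (2 * δ)) = Real.log w := by field_simp
    rw [this, Real.exp_log hw0]
  have hs : 0 ≤ l / n := by positivity
  have hone := lintegral_exp_mul_min_le hint (hZ0 0) (a := a) (b := δ * a) (L := l * δ) hs
    (by positivity) (by nlinarith) (by
      rw [div_mul_eq_mul_div, div_le_iff₀ hn0]
      have : 0 ≤ l * δ := by positivity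
      nlinarith)
  rw [hV] at hone
  have hmgf := (hexp (l / n) hs (δ * a) n).trans (mul_le_mul_right (pow_le_pow_left' hone n) _)
  have hmeas : AEMeasurable (fun ω => ENNReal.ofReal
      (Real.exp (l / n * ∑ i ∈ Finset.range n, min (Z i ω) (δ * a)))) P := by
    refine AEMeasurable.ennreal_ofReal (Real.measurable_exp.comp_aemeasurable ?_)
    exact (Finset.aemeasurable_fun_sum _ fun i _ => (hm i).min aemeasurable_const).const_mul _
  have hmarkov := (mul_meas_ge_le_lintegral₀ hmeas
    (ENNReal.ofReal (Real.exp (l * (m + 2 * δ))))).trans hmgf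
  have hsub : P {ω | (n : ℝ) * (m + 2 * δ) < ∑ i ∈ Finset.range n, min (Z i ω) (δ * a)} ≤
      P {ω | ENNReal.ofReal (Real.exp (l * (m + 2 * δ))) ≤ ENNReal.ofReal
        (Real.exp (l / n * ∑ i ∈ Finset.range n, min (Z i ω) (δ * a)))} := by
    refine measure_mono fun ω hω => ENNReal.ofReal_le_ofReal (Real.exp_le_exp.2 ?_)
    have : l * (m + 2 * δ) = l / n * (n * (m + 2 * δ)) := by field_simp
    rw [this]
    exact mul_le_mul_of_nonneg_left (Set.mem_ofPred.1 hω).le hs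
  have hfin : Real.exp (-(l * (m + 2 * δ))) * (K * Real.exp (l / n * m
      + (l / n) ^ 2 * Real.exp (l * δ) * (a * v)) ^ n) ≤ K * Real.exp (2 / δ ^ 2) * w := by
    have hsq : (l * δ) ^ 2 ≤ 2 * Real.exp (l * δ) := by
      have := Real.pow_div_factorial_le_exp (l * δ) (by positivity) 2
      rw [div_le_iff₀ (by positivity)] at this
      simpa [mul_comm, Nat.factorial] using this
    have h1 : n * (l / n * m + (l / n) ^ 2 * Real.exp (l * δ) * (a * v))
        ≤ l * m + 2 / δ ^ 2 := by
      have e1 : n * (l / n * m + (l / n) ^ 2 * Real.exp (l * δ) * (a * v))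
          = l * m + (l ^ 2 * Real.exp (l * δ) * v) * (a / n) := by
        field_simp
      have e2 : a / n ≤ 1 := (div_le_one hn0).2 han
      have e3 : l ^ 2 * Real.exp (l * δ) * v ≤ 2 / δ ^ 2 := by
        rw [le_div_iff₀ (by positivity)]
        calc l ^ 2 * Real.exp (l * δ) * v * δ ^ 2 = (l * δ) ^ 2 * Real.exp (l * δ) * v := by ring
          _ ≤ 2 * Real.exp (l * δ) * Real.exp (l * δ) * w := by gcongr
          _ = 2 := by
            rw [mul_assoc 2, hexpl]
            field_simp
      have e4 : 0 ≤ l ^ 2 * Real.exp (l * δ) * v := by positivity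
      rw [e1]
      nlinarith
    rw [← Real.exp_nat_mul]
    calc Real.exp (-(l * (m + 2 * δ))) * (K * Real.exp (n * (l / n * m
          + (l / n) ^ 2 * Real.exp (l * δ) * (a * v))))
        ≤ Real.exp (-(l * (m + 2 * δ))) * (K * Real.exp (l * m + 2 / δ ^ 2)) := by gcongr
      _ = K * Real.exp (2 / δ ^ 2) * Real.exp (-(l * (2 * δ))) := by
        rw [mul_left_comm, ← Real.exp_add, mul_assoc, ← Real.exp_add]
        congr 2
        ring
      _ = _ := by rw [hneg]
  refine hsub.trans (le_trans ?_ (ENNReal.ofReal_le_ofReal hfin))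
  rw [ENNReal.ofReal_mul (Real.exp_nonneg _), ENNReal.ofReal_mul (by linarith),
    ENNReal.ofReal_pow (Real.exp_nonneg _)]
  refine le_trans (le_of_eq ?_) (mul_le_mul_right hmarkov _)
  rw [← mul_assoc, ← ENNReal.ofReal_mul (Real.exp_nonneg _), ← Real.exp_add]
  simp

theorem measure_sum_gt_le {K : ℝ} (hK : 1 ≤ K) {Z : ℕ → Ω → ℝ} (hZ0 : ∀ i, 0 ≤ Z i)
    (hid : ∀ i, ProbabilityTheory.IdentDistrib (Z i) (Z 0) P P) (hint : Integrable (Z 0) P)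
    (hexp : ∀ s, 0 ≤ s → ∀ b n, ∫⁻ ω, ENNReal.ofReal
        (Real.exp (s * ∑ i ∈ Finset.range n, min (Z i ω) b)) ∂P
      ≤ ENNReal.ofReal K * (∫⁻ ω, ENNReal.ofReal (Real.exp (s * min (Z 0 ω) b)) ∂P) ^ n)
    {δ : ℝ} (hδ : 0 < δ) (hδ1 : δ ≤ 1) {a : ℝ} (ha : 1 ≤ a) {n : ℕ} (han : a ≤ n)
    (hna : n ≤ 2 * a) :
    P {ω | (n : ℝ) * (∫ ω, Z 0 ω ∂P + 2 * δ) < ∑ i ∈ Finset.range n, Z i ω} ≤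
      ENNReal.ofReal ((2 / δ ^ 2 + K * Real.exp (2 / δ ^ 2))
        * (∫ ω, min (Z 0 ω) a ^ 2 / a ∂P + 1 / a)) := by
  have ha0 : 0 < a := by linarith
  have hm : ∀ i, AEMeasurable (Z i) P := fun i => (hid i).aemeasurable_fst
  have hmin := measure_sum_min_gt_le hK hZ0 hm hint hexp hδ hδ1 ha han
  set m := ∫ ω, Z 0 ω ∂P
  set v := ∫ ω, min (Z 0 ω) a ^ 2 / a ∂P with hv
  have hv0 : 0 ≤ v := integral_nonneg fun ω => by positivity
  have hbig : P.real {ω | δ * a < Z 0 ω} ≤ v / (δ ^ 2 * a) := by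
    rw [le_div_iff₀ (by positivity), mul_comm]
    have h1 := mul_meas_ge_le_integral_of_nonneg (μ := P)
      (ae_of_all _ fun ω => by positivity : 0 ≤ᵐ[P] fun ω => min (Z 0 ω) a ^ 2 / a)
      ((integrable_min_sq (hm 0) (hZ0 0) ha0.le).div_const a) (δ ^ 2 * a)
    refine le_trans (mul_le_mul_of_nonneg_left (measureReal_mono fun ω hω => ?_)
      (by positivity)) h1
    have h2 : δ * a ≤ min (Z 0 ω) a := le_min (Set.mem_ofPred.1 hω).le (by nlinarith)
    have h3 : (δ * a) ^ 2 ≤ min (Z 0 ω) a ^ 2 := pow_le_pow_left₀ (by positivity) h2 2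
    simp only [Set.mem_ofPred_eq]
    rw [le_div_iff₀ ha0]
    linarith
  have hunion : P (⋃ i ∈ Finset.range n, {ω | δ * a < Z i ω})
      ≤ ENNReal.ofReal (2 / δ ^ 2 * v) := by
    calc P (⋃ i ∈ Finset.range n, {ω | δ * a < Z i ω})
        ≤ ∑ i ∈ Finset.range n, P {ω | δ * a < Z i ω} := measure_biUnion_finset_le _ _
      _ = ∑ i ∈ Finset.range n, P {ω | δ * a < Z 0 ω} :=
          Finset.sum_congr rfl fun i _ => (hid i).measure_mem_eq measurableSet_Ioi
      _ = ENNReal.ofReal (n * P.real {ω | δ * a < Z 0 ω}) := by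
          rw [ENNReal.ofReal_mul (by positivity), ofReal_measureReal]
          simp
      _ ≤ _ := by
          refine ENNReal.ofReal_le_ofReal ?_
          calc n * P.real {ω | δ * a < Z 0 ω} ≤ 2 * a * (v / (δ ^ 2 * a)) := by gcongr
            _ = 2 / δ ^ 2 * v := by field_simp
  have hsub : {ω | (n : ℝ) * (m + 2 * δ) < ∑ i ∈ Finset.range n, Z i ω} ⊆
      (⋃ i ∈ Finset.range n, {ω | δ * a < Z i ω}) ∪
      {ω | (n : ℝ) * (m + 2 * δ) < ∑ i ∈ Finset.range n, min (Z i ω) (δ * a)} := by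
    intro ω hω
    by_cases hω' : ω ∈ ⋃ i ∈ Finset.range n, {ω | δ * a < Z i ω}
    · exact Or.inl hω'
    · right
      simp only [Set.mem_iUnion, Set.mem_ofPred_eq, exists_prop, not_exists, not_and, not_lt]
        at hω hω' ⊢
      rwa [Finset.sum_congr rfl fun i hi => min_eq_left (hω' i hi)]
  refine (measure_mono hsub).trans ((measure_union_le _ _).trans
    ((add_le_add hunion hmin).trans ?_))
  rw [← ENNReal.ofReal_add (by positivity) (by positivity)]
  refine ENNReal.ofReal_le_ofReal ?_
  have h1 : 0 < 1 / a := by positivity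
  have h2 : 0 ≤ 2 / δ ^ 2 * (1 / a) := by positivity
  nlinarith

end Tail

section StrongLaw

variable {Ω : Type*} [MeasurableSpace Ω] {P : Measure Ω} [IsProbabilityMeasure P]

theorem summable_integral_min_sq_div_pow {Y : Ω → ℝ} (hY : Integrable Y P) (hY0 : 0 ≤ Y) {c : ℝ}
    (hc : 1 < c) : Summable fun k : ℕ => ∫ ω, min (Y ω) (c ^ k) ^ 2 / c ^ k ∂P := by
  have hc0 : 0 < c := by linarith
  have hint : ∀ k : ℕ, Integrable (fun ω => min (Y ω) (c ^ k) ^ 2 / c ^ k) P := fun k =>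
    (integrable_min_sq hY.aemeasurable hY0 (by positivity)).div_const _
  refine summable_of_sum_range_le (c := ∫ ω, 4 * c / (c - 1) * Y ω ∂P)
    (fun k => integral_nonneg fun ω => by positivity) fun n => ?_
  rw [← integral_finsetSum _ fun k _ => hint k]
  exact integral_mono (integrable_finsetSum _ fun k _ => hint k) (hY.const_mul _)
    fun ω => sum_min_sq_div_pow_le (hY0 ω) hc n

theorem eventually_sum_le_of_eventually_sum_ceil_pow_le {z : ℕ → ℝ} (hz : ∀ i, 0 ≤ z i)
    {c A ε : ℝ} (hc : 1 < c) (hA : 0 ≤ A) (hε0 : 0 < ε)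
    (h : ∀ᶠ k : ℕ in atTop, ∑ i ∈ Finset.range ⌈c ^ k⌉₊, z i ≤ ⌈c ^ k⌉₊ * A) :
    ∀ᶠ n : ℕ in atTop, ∑ i ∈ Finset.range n, z i ≤ n * (A * c + ε) := by
  obtain ⟨k₀, hk₀⟩ := eventually_atTop.1 h
  obtain ⟨N, hN⟩ := exists_nat_gt (max (c ^ k₀) (A / ε))
  have hc0 : 0 < c := by linarith
  filter_upwards [eventually_ge_atTop (max N 1)] with n hn
  have hnN : (N : ℝ) ≤ n := by exact_mod_cast (le_max_left _ _).trans hn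
  have hn1 : (1 : ℝ) ≤ n := by exact_mod_cast (le_max_right _ _).trans hn
  have hn2 : c ^ k₀ < n := (le_max_left _ _).trans_lt (hN.trans_le hnN)
  have hn3 : A / ε < n := (le_max_right _ _).trans_lt (hN.trans_le hnN)
  obtain ⟨j, hj, hj'⟩ := exists_nat_pow_near hn1 hc
  have hkj : k₀ ≤ j + 1 := by
    by_contra! hlt
    exact absurd (pow_le_pow_right₀ hc.le hlt.le) (not_le.2 (hn2.trans hj'))
  have hceil : (⌈c ^ (j + 1)⌉₊ : ℝ) ≤ c * n + 1 := by
    have h1 := (Nat.ceil_lt_add_one (by positivity : 0 ≤ c ^ (j + 1))).le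
    rw [pow_succ'] at h1 ⊢
    nlinarith
  calc ∑ i ∈ Finset.range n, z i ≤ ∑ i ∈ Finset.range ⌈c ^ (j + 1)⌉₊, z i := by
        refine Finset.sum_le_sum_of_subset_of_nonneg (Finset.range_subset_range.2 ?_)
          fun i _ _ => hz i
        exact_mod_cast hj'.le.trans (Nat.le_ceil _)
    _ ≤ ⌈c ^ (j + 1)⌉₊ * A := hk₀ _ hkj
    _ ≤ (c * n + 1) * A := by gcongr
    _ ≤ n * (A * c + ε) := by
        rw [div_lt_iff₀ hε0] at hn3
        nlinarith

theorem ae_eventually_sum_le_of_nonneg {K : ℝ} (hK : 1 ≤ K) {Z : ℕ → Ω → ℝ}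
    (hZ0 : ∀ i, 0 ≤ Z i) (hid : ∀ i, ProbabilityTheory.IdentDistrib (Z i) (Z 0) P P)
    (hint : Integrable (Z 0) P)
    (hexp : ∀ s, 0 ≤ s → ∀ b n, ∫⁻ ω, ENNReal.ofReal
        (Real.exp (s * ∑ i ∈ Finset.range n, min (Z i ω) b)) ∂P
      ≤ ENNReal.ofReal K * (∫⁻ ω, ENNReal.ofReal (Real.exp (s * min (Z 0 ω) b)) ∂P) ^ n)
    {ε : ℝ} (hε : 0 < ε) :
    ∀ᵐ ω ∂P, ∀ᶠ n : ℕ in atTop, ∑ i ∈ Finset.range n, Z i ω ≤ n * (∫ ω, Z 0 ω ∂P + ε) := by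
  set m := ∫ ω, Z 0 ω ∂P
  have hm0 : 0 ≤ m := integral_nonneg (hZ0 0)
  set δ := min 1 (ε / 8)
  have hδ : 0 < δ := lt_min one_pos (by positivity)
  have hδε : δ ≤ ε / 8 := min_le_right _ _
  set A := m + 2 * δ with hA
  have hA0 : 0 < A := by positivity
  set c := 1 + ε / (4 * A) with hcdef
  have hc : 1 < c := by
    have : 0 < ε / (4 * A) := by positivity
    linarith
  have hc0 : 0 < c := by linarith
  have hAc : A * c + ε / 4 ≤ m + ε := by
    have : A * c = A + ε / 4 := by
      rw [hcdef]
      field_simp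
    linarith
  have hsum : Summable fun k : ℕ => (2 / δ ^ 2 + K * Real.exp (2 / δ ^ 2)) *
      (∫ ω, min (Z 0 ω) (c ^ k) ^ 2 / c ^ k ∂P + 1 / c ^ k) := by
    refine ((summable_integral_min_sq_div_pow hint (hZ0 0) hc).add ?_).mul_left _
    simp_rw [← one_div_pow]
    exact summable_geometric_of_lt_one (by positivity) ((div_lt_one hc0).2 hc)
  have hBC : ∑' k : ℕ, P {ω | (⌈c ^ k⌉₊ : ℝ) * A < ∑ i ∈ Finset.range ⌈c ^ k⌉₊, Z i ω} ≠ ∞ := by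
    refine ne_top_of_le_ne_top hsum.tsum_ofReal_lt_top.ne (ENNReal.tsum_le_tsum fun k => ?_)
    have h1 : 1 ≤ c ^ k := one_le_pow₀ hc.le
    refine measure_sum_gt_le hK hZ0 hid hint hexp hδ (min_le_left _ _) h1 (Nat.le_ceil _) ?_
    linarith [(Nat.ceil_lt_add_one (by positivity : 0 ≤ c ^ k)).le]
  filter_upwards [ae_eventually_notMem hBC] with ω hω
  have := eventually_sum_le_of_eventually_sum_ceil_pow_le (fun i => hZ0 i ω) hc hA0.le
    (ε := ε / 4) (by positivity) (hω.mono fun k hk => by simpa using hk)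
  filter_upwards [this] with n hn
  exact hn.trans (by gcongr)

theorem UpperDominated.ae_eventually_sum_le {K : ℝ} (hK : 1 ≤ K) {X : ℕ → Ω → ℝ}
    (hX : UpperDominated P (ENNReal.ofReal K) X)
    (hid : ∀ i, ProbabilityTheory.IdentDistrib (X i) (X 0) P P) (hint : Integrable (X 0) P)
    {ε : ℝ} (hε : 0 < ε) :
    ∀ᵐ ω ∂P, ∀ᶠ n : ℕ in atTop, ∑ i ∈ Finset.range n, X i ω ≤ n * (∫ ω, X 0 ω ∂P + ε) := by
  have hm : ∀ i, AEMeasurable (X i) P := fun i => (hid i).aemeasurable_fst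
  have hlim : Tendsto (fun M : ℕ => ∫ ω, max (X 0 ω) (-M) ∂P) atTop (nhds (∫ ω, X 0 ω ∂P)) := by
    refine tendsto_integral_of_dominated_convergence (fun ω => |X 0 ω|)
      (fun M => ((hm 0).max aemeasurable_const).aestronglyMeasurable) hint.abs
      (fun M => ae_of_all _ fun ω => ?_) (ae_of_all _ fun ω => ?_)
    · have hM : (0 : ℝ) ≤ M := M.cast_nonneg
      rw [Real.norm_eq_abs, abs_le]
      exact ⟨(neg_abs_le _).trans (le_max_left _ _),
        max_le (le_abs_self _) (by linarith [abs_nonneg (X 0 ω)])⟩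
    · refine tendsto_const_nhds.congr' ?_
      obtain ⟨N, hN⟩ := exists_nat_gt (-X 0 ω)
      filter_upwards [eventually_ge_atTop N] with M hM
      have : (N : ℝ) ≤ M := by exact_mod_cast hM
      rw [max_eq_left (by linarith)]
  obtain ⟨M, hM⟩ := (hlim.eventually_lt_const
    (lt_add_of_pos_right _ (half_pos hε) : ∫ ω, X 0 ω ∂P < ∫ ω, X 0 ω ∂P + ε / 2)).exists
  have hgm : Monotone fun x : ℝ => max x (-M) + M := fun x y hxy => by dsimp only; gcongr
  have hgc : Continuous fun x : ℝ => max x (-M) + M := by fun_prop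
  have hmaxint : Integrable (fun ω => max (X 0 ω) (-M)) P := hint.sup (integrable_const _)
  have hZid : ∀ i, ProbabilityTheory.IdentDistrib (fun ω => max (X i ω) (-M) + M)
      (fun ω => max (X 0 ω) (-M) + M) P P := fun i => (hid i).comp hgc.measurable
  have hev := ae_eventually_sum_le_of_nonneg hK (Z := fun i ω => max (X i ω) (-M) + M)
    (fun i ω => by simpa using neg_le_iff_add_nonneg.1 (le_max_right (X i ω) (-(M : ℝ)))) hZid
    (hmaxint.add (integrable_const _)) (fun s hs b n => ?_) (half_pos hε)
  · filter_upwards [hev] with ω hω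
    filter_upwards [hω] with n hn
    rw [integral_add hmaxint (integrable_const _), integral_const, probReal_univ, one_smul,
      Finset.sum_add_distrib, Finset.sum_const, Finset.card_range, nsmul_eq_mul] at hn
    calc ∑ i ∈ Finset.range n, X i ω ≤ ∑ i ∈ Finset.range n, max (X i ω) (-M) :=
          Finset.sum_le_sum fun i _ => le_max_left _ _
      _ ≤ n * (∫ ω, max (X 0 ω) (-M) ∂P + ε / 2) := by linarith
      _ ≤ n * (∫ ω, X 0 ω ∂P + ε) :=
          mul_le_mul_of_nonneg_left (by linarith) n.cast_nonneg
  · have hprod := hX.lintegral_prod_le hm (n := n)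
      (f := fun _ x => Real.exp (s * min (max x (-M) + M) b))
      (fun _ x y hxy => Real.exp_le_exp.2
        (mul_le_mul_of_nonneg_left (min_le_min_right _ (hgm hxy)) hs))
      (fun _ => by fun_prop) (fun _ x => Real.exp_nonneg _)
    refine le_trans (le_of_eq (lintegral_congr fun ω => ?_)) (hprod.trans (le_of_eq ?_))
    · rw [Finset.mul_sum, Real.exp_sum,
        ENNReal.ofReal_prod_of_nonneg fun i _ => Real.exp_nonneg _]
    · congr 1
      rw [Finset.prod_congr rfl (g := fun _ => ∫⁻ ω, ENNReal.ofReal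
        (Real.exp (s * min (max (X 0 ω) (-M) + M) b)) ∂P), Finset.prod_const, Finset.card_range]
      intro i _
      exact ((hid i).comp (u := fun x : ℝ => ENNReal.ofReal
        (Real.exp (s * min (max x (-M) + M) b))) (by fun_prop)).lintegral_eq

/-- Strong law of large numbers for sequences whose joint tails are dominated on both sides. -/
theorem UpperDominated.strong_law {K : ℝ} (hK : 1 ≤ K) {X : ℕ → Ω → ℝ}
    (hX : UpperDominated P (ENNReal.ofReal K) X)
    (hX' : UpperDominated P (ENNReal.ofReal K) fun i ω => -X i ω)
    (hid : ∀ i, ProbabilityTheory.IdentDistrib (X i) (X 0) P P) (hint : Integrable (X 0) P) :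
    ∀ᵐ ω ∂P, Tendsto (fun n : ℕ => (∑ k ∈ Finset.range n, X k ω) / n) atTop
      (nhds (∫ ω, X 0 ω ∂P)) := by
  have hpos : ∀ j : ℕ, (0 : ℝ) < 1 / ((j : ℝ) + 1) := fun j => by positivity
  have h1 := ae_all_iff.2 fun j : ℕ => hX.ae_eventually_sum_le hK hid hint (hpos j)
  have h2 := ae_all_iff.2 fun j : ℕ =>
    hX'.ae_eventually_sum_le hK (fun i => (hid i).comp measurable_neg) hint.neg (hpos j)
  filter_upwards [h1, h2] with ω hω1 hω2
  refine Metric.tendsto_atTop.2 fun ε hε => ?_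
  obtain ⟨j, hj⟩ := exists_nat_one_div_lt hε
  obtain ⟨N, hN⟩ := eventually_atTop.1 ((hω1 j).and ((hω2 j).and (eventually_gt_atTop 0)))
  refine ⟨N, fun n hn => ?_⟩
  obtain ⟨ha, hb, hn0⟩ := hN n hn
  have hn0' : (0 : ℝ) < n := by exact_mod_cast hn0
  rw [Finset.sum_neg_distrib, integral_neg] at hb
  have hu : (∑ k ∈ Finset.range n, X k ω) / n ≤ ∫ ω, X 0 ω ∂P + 1 / ((j : ℝ) + 1) := by
    rw [div_le_iff₀ hn0']
    linarith
  have hl : ∫ ω, X 0 ω ∂P - 1 / ((j : ℝ) + 1) ≤ (∑ k ∈ Finset.range n, X k ω) / n := by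
    rw [le_div_iff₀ hn0']
    linarith
  rw [Real.dist_eq, abs_lt]
  constructor <;> linarith

end StrongLaw

theorem limsup_abs_ne_top_of_tendsto {u : ℕ → ℝ} {a : ℝ} (h : Tendsto u atTop (nhds a)) :
    limsup (fun n => ((|u n| : ℝ) : EReal)) atTop ≠ ⊤ := by
  have : Tendsto (fun n => ((|u n| : ℝ) : EReal)) atTop (nhds ((|a| : ℝ) : EReal)) :=
    (continuous_coe_real_ereal.tendsto _).comp h.abs
  rw [this.limsup_eq]
  exact EReal.coe_ne_top _

/-- Corollary 4.6, converse part: if the limsup of `|S_n|/n` is not a.s.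
infinite, then `X₁` is integrable; and if `S_n/n → μ` with positive
probability, then `X₁` is integrable, `μ = E[X₁]` and the convergence holds
with probability one. -/
theorem stmt14 {Ω : Type} [MeasurableSpace Ω] (P : Measure Ω)
    [IsProbabilityMeasure P] (X : ℕ → Ω → ℝ)
    (K : ℝ) (hK : 1 ≤ K)
    (hid : ∀ i, ProbabilityTheory.IdentDistrib (X i) (X 0) P P)
    (hEND : ENDProb P K X) :
    (P {ω | limsup (fun n : ℕ =>
        ((|∑ k ∈ Finset.range n, X k ω| / n : ℝ) : EReal)) atTop = ⊤} < 1 →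
      Integrable (X 0) P) ∧
    (∀ μ : ℝ,
      0 < P {ω | Tendsto (fun n : ℕ => (∑ k ∈ Finset.range n, X k ω) / n)
          atTop (nhds μ)} →
      Integrable (X 0) P ∧ μ = ∫ ω, X 0 ω ∂P ∧
        P {ω | Tendsto (fun n : ℕ => (∑ k ∈ Finset.range n, X k ω) / n)
            atTop (nhds μ)} = 1) := by
  have hX : UpperDominated P (ENNReal.ofReal K) X := fun n x => (hEND n x).2
  have hX' : UpperDominated P (ENNReal.ofReal K) fun i ω => -X i ω :=
    upperDominated_neg fun n x => (hEND n x).1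
  constructor
  · intro h
    refine integrable_of_not_ae_limsup_eq_top hX hX' hid fun hae => h.ne ?_
    exact (measure_congr (eventuallyEq_univ.2 hae)).trans measure_univ
  · intro μ hμ
    have hint : Integrable (X 0) P := by
      refine integrable_of_not_ae_limsup_eq_top hX hX' hid fun hae => hμ.ne' ?_
      refine measure_mono_null (fun ω hω => ?_) (ae_iff.1 hae)
      intro htop
      refine limsup_abs_ne_top_of_tendsto (Set.mem_ofPred.1 hω) ?_
      simpa only [abs_div, Nat.abs_cast] using htop
    have hlaw := hX.strong_law hK hX' hid hint
    obtain ⟨ω, hω, hω'⟩ : ∃ ω, Tendsto (fun n : ℕ => (∑ k ∈ Finset.range n, X k ω) / n)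
        atTop (nhds μ) ∧ Tendsto (fun n : ℕ => (∑ k ∈ Finset.range n, X k ω) / n)
        atTop (nhds (∫ ω, X 0 ω ∂P)) := by
      by_contra! hcon
      exact hμ.ne' (measure_mono_null (fun ω hω => hcon ω hω) hlaw)
    have heq := tendsto_nhds_unique hω hω'
    refine ⟨hint, heq, ?_⟩
    rw [heq]
    exact (measure_congr (eventuallyEq_univ.2 hlaw)).trans measure_univ
end
end
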